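/- For every α > 0 there exists an integer n₀ = n₀(α) such that every oriented graph G on n ≥ n₀ vertices with minimum semidegree δ⁰(G) ≥ (3/8 + α)n contains every orientation of a Hamilton cycle: for every sequence ε₁, …, εₙ ∈ {+1, −1} there is a cyclic ordering v₁, v₂, …, vₙ of all the vertices of G such that for each i (indices mod n), G contains the edge vᵢvᵢ₊₁ if εᵢ = +1 and the edge vᵢ₊₁vᵢ if εᵢ = −1. -/

import Mathlib

/-- The outdegree of a vertex `x` in the digraph with adjacency relation `G`. -/
noncomputable def outDeg {V : Type*} (G : V → V → Prop) (x : V) : ℕ :=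
  Nat.card {y : V // G x y}

/-- The indegree of a vertex `x` in the digraph with adjacency relation `G`. -/
noncomputable def inDeg {V : Type*} (G : V → V → Prop) (x : V) : ℕ :=
  Nat.card {y : V // G y x}

/-- An oriented graph: no loops and no 2-cycles. -/
def IsOriented {V : Type*} (G : V → V → Prop) : Prop :=
  ∀ x y : V, G x y → ¬ G y x

/-!
Semidegree above `(3/8 + α) n` makes an oriented graph a robust expander in both directions for sets
of at least `3n/8` vertices. Hence any two vertices are joined by walks following any direction
pattern of a suitable constant length, with linearly many choices for every inner vertex. Chaining
vertices with many common neighbours, one even finds, for every such pattern and all vertices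
`x, y`, many walks that remain walks with the same pattern and ends after `y` is exchanged for `x`.

Cut the cyclic pattern into linearly many such absorbing segments, followed by alternating short
connecting pieces and long pieces. A greedy choice of the absorbing segments lets many of them
exchange a vertex of any given large candidate set for any given `x`. The long pieces cover almost
all remaining vertices: disjoint perfect matchings of the expander and a random labelling of the
vertices by pattern positions yield nearly perfect matchings between the label classes. Finally,
each vertex of a connecting piece is taken from an absorbing segment, which takes up an uncovered
vertex in exchange; the lengths are such that this uses up all vertices exactly when the cycle
closes.
-/

namespace OrientedHamilton

open Finset
open scoped Classical

universe u

/-- Adjacency in a prescribed direction: `DirAdj G true x y` means that `x → y` is an edge of `G`,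
and `DirAdj G false x y` that `y → x` is one. -/
def DirAdj {V : Type*} (G : V → V → Prop) : Bool → V → V → Prop
  | true, x, y => G x y
  | false, x, y => G y x

/-- The out-neighbourhood (`s = true`) or in-neighbourhood (`s = false`) of `x`. -/
noncomputable def nbhd {V : Type*} [Fintype V] (G : V → V → Prop) (s : Bool) (x : V) : Finset V :=
  {y | DirAdj G s x y}

/-- The robust neighbourhood of `S` against direction `s`: the vertices having at least `ν n`
neighbours in direction `s` inside `S`, where `n` is the number of vertices. -/
noncomputable def robustNbhd {V : Type*} [Fintype V] (G : V → V → Prop) (ν : ℝ) (s : Bool)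
    (S : Finset V) : Finset V :=
  {v | ν * Fintype.card V ≤ #(nbhd G s v ∩ S)}

/-- Robust expansion in both directions. Since all semidegrees exceed `3n/8`, expansion is only
required of sets with at least `3n/8` vertices. -/
structure IsExpander {V : Type*} [Fintype V] (G : V → V → Prop) (ν : ℝ) : Prop where
  pos : 0 < ν
  small : ν ≤ 1 / 800
  card_pos : 0 < Fintype.card V
  degree : ∀ s x, (3 / 8 + 2 * ν) * (Fintype.card V : ℝ) ≤ #(nbhd G s x)
  expand : ∀ s (S : Finset V), 3 / 8 * (Fintype.card V : ℝ) ≤ #S →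
    min (Fintype.card V : ℝ) (#S + ν * Fintype.card V) ≤ #(robustNbhd G ν s S)

/-- The number of edges from `X` to `Y` (`s = true`) or from `Y` to `X` (`s = false`). -/
noncomputable def edgeCount {V : Type*} [Fintype V] (G : V → V → Prop) (s : Bool)
    (X Y : Finset V) : ℝ :=
  ∑ v ∈ X, (#(nbhd G s v ∩ Y) : ℝ)

section Neighbourhoods

variable {V : Type*} {G : V → V → Prop} {s : Bool}

lemma dirAdj_not {x y : V} : DirAdj G (!s) x y ↔ DirAdj G s y x := by
  cases s <;> rfl

lemma dirAdj_flip {x y : V} : DirAdj (flip G) s x y ↔ DirAdj G (!s) x y := by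
  cases s <;> rfl

lemma DirAdj.map {W : Type*} {H : W → W → Prop} {f : V → W} (hf : ∀ x y, G x y → H (f x) (f y))
    {x y : V} (h : DirAdj G s x y) : DirAdj H s (f x) (f y) := by
  cases s <;> exact hf _ _ h

lemma _root_.IsOriented.not_dirAdj_not (hG : IsOriented G) {x y : V} (h : DirAdj G s x y) :
    ¬ DirAdj G (!s) x y := by
  cases s <;> exact hG _ _ h

variable [Fintype V]

lemma mem_nbhd {x y : V} : y ∈ nbhd G s x ↔ DirAdj G s x y := by
  simp [nbhd]

lemma mem_nbhd_not {x y : V} : y ∈ nbhd G (!s) x ↔ x ∈ nbhd G s y := by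
  simp only [mem_nbhd, dirAdj_not]

lemma nbhd_flip (G : V → V → Prop) (s : Bool) (x : V) : nbhd (flip G) s x = nbhd G (!s) x := by
  ext y
  simp only [mem_nbhd, dirAdj_flip]

lemma mem_robustNbhd {ν : ℝ} {S : Finset V} {v : V} :
    v ∈ robustNbhd G ν s S ↔ ν * Fintype.card V ≤ #(nbhd G s v ∩ S) := by
  simp [robustNbhd]

lemma robustNbhd_flip (G : V → V → Prop) (ν : ℝ) (s : Bool) (S : Finset V) :
    robustNbhd (flip G) ν s S = robustNbhd G ν (!s) S := by
  simp only [robustNbhd, nbhd_flip]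

lemma IsExpander.flip {ν : ℝ} (h : IsExpander G ν) : IsExpander (flip G) ν where
  pos := h.pos
  small := h.small
  card_pos := h.card_pos
  degree s x := nbhd_flip G s x ▸ h.degree _ _
  expand s S hS := robustNbhd_flip G ν s S ▸ h.expand _ _ hS

end Neighbourhoods

section EdgeCount

variable {V : Type*} [Fintype V] {G : V → V → Prop} {s : Bool} {X X' Y Y' : Finset V}

lemma edgeCount_not_swap (G : V → V → Prop) (s : Bool) (X Y : Finset V) :
    edgeCount G (!s) Y X = edgeCount G s X Y := by
  have h := sum_card_bipartiteAbove_eq_sum_card_bipartiteBelow (s := X) (t := Y) (DirAdj G s)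
  have habove (v) : bipartiteAbove (DirAdj G s) Y v = nbhd G s v ∩ Y := by
    ext w; simp [bipartiteAbove, mem_nbhd, and_comm]
  have hbelow (v) : bipartiteBelow (DirAdj G s) X v = nbhd G (!s) v ∩ X := by
    ext w; simp [bipartiteBelow, mem_nbhd, dirAdj_not, and_comm]
  simp only [habove, hbelow] at h
  simp only [edgeCount]
  exact_mod_cast h.symm

lemma edgeCount_mono (hX : X ⊆ X') (hY : Y ⊆ Y') : edgeCount G s X Y ≤ edgeCount G s X' Y' :=
  (sum_le_sum fun _ _ => Nat.cast_le.2 (card_le_card (inter_subset_inter_left hY))).trans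
    (sum_le_sum_of_subset_of_nonneg hX fun _ _ _ => Nat.cast_nonneg _)

lemma edgeCount_union_right (h : Disjoint Y Y') :
    edgeCount G s X (Y ∪ Y') = edgeCount G s X Y + edgeCount G s X Y' := by
  simp only [edgeCount, ← sum_add_distrib, ← Nat.cast_add, inter_union_distrib_left]
  exact sum_congr rfl fun _ _ => congrArg _ (card_union_of_disjoint
    (h.mono inter_subset_right inter_subset_right))

lemma edgeCount_add_edgeCount_compl (X Y : Finset V) :
    edgeCount G s X Y + edgeCount G s X Yᶜ = edgeCount G s X univ := by
  rw [← edgeCount_union_right disjoint_compl_right, union_compl]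

lemma edgeCount_le_card_mul_card (X Y : Finset V) : edgeCount G s X Y ≤ #X * #Y := by
  rw [← nsmul_eq_mul]
  exact sum_le_card_nsmul _ _ _ fun _ _ => Nat.cast_le.2 (card_le_card inter_subset_right)

lemma _root_.IsOriented.edgeCount_add_edgeCount_not_le (hG : IsOriented G) (s : Bool)
    (X Y : Finset V) : edgeCount G s X Y + edgeCount G (!s) X Y ≤ #X * #Y := by
  rw [edgeCount, edgeCount, ← sum_add_distrib, ← nsmul_eq_mul]
  refine sum_le_card_nsmul _ _ _ fun v _ => ?_
  have hdisj : Disjoint (nbhd G s v ∩ Y) (nbhd G (!s) v ∩ Y) :=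
    disjoint_left.2 fun w hw hw' => hG.not_dirAdj_not (mem_nbhd.1 (mem_inter.1 hw).1)
      (mem_nbhd.1 (mem_inter.1 hw').1)
  rw [← Nat.cast_add, ← card_union_of_disjoint hdisj]
  exact_mod_cast card_le_card (union_subset inter_subset_right inter_subset_right)

lemma _root_.IsOriented.two_mul_edgeCount_self_le (hG : IsOriented G) (s : Bool) (X : Finset V) :
    2 * edgeCount G s X X ≤ #X * #X := by
  have h := hG.edgeCount_add_edgeCount_not_le s X X
  rwa [edgeCount_not_swap, ← two_mul] at h

lemma mul_card_le_edgeCount_univ {d : ℝ} (hd : ∀ x, d ≤ #(nbhd G s x)) (X : Finset V) :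
    d * #X ≤ edgeCount G s X univ := by
  rw [edgeCount, mul_comm, ← nsmul_eq_mul]
  exact card_nsmul_le_sum _ _ _ fun v _ => by simpa using hd v

lemma edgeCount_compl_robustNbhd_le {ν : ℝ} (hν : 0 ≤ ν) (S : Finset V) :
    edgeCount G s (robustNbhd G ν s S)ᶜ S ≤ ν * (Fintype.card V) ^ 2 := by
  calc edgeCount G s (robustNbhd G ν s S)ᶜ S
      ≤ #(robustNbhd G ν s S)ᶜ • (ν * (Fintype.card V : ℝ)) :=
        sum_le_card_nsmul _ _ _ fun v hv => by
          rw [mem_compl, mem_robustNbhd, not_le] at hv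
          exact hv.le
    _ ≤ Fintype.card V • (ν * (Fintype.card V : ℝ)) :=
        nsmul_le_nsmul_left (by positivity) (card_le_univ _)
    _ = ν * (Fintype.card V) ^ 2 := by rw [nsmul_eq_mul]; ring

end EdgeCount

section Expansion

/-! ### Robust expansion -/

variable {V : Type*} [Fintype V] {G : V → V → Prop} {s : Bool} {S T : Finset V} {d η : ℝ}

lemma degree_mul_card_inter_le (hG : IsOriented G) (hd : ∀ s x, d ≤ #(nbhd G s x))
    (hη : edgeCount G s Tᶜ S ≤ η) :
    d * #(S ∩ T) ≤ #(S ∩ T) * #(S ∩ T) / 2 + #(T \ S) * #(S ∩ T) + η := by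
  have hdeg := mul_card_le_edgeCount_univ (hd (!s)) (S ∩ T)
  have hsplit := edgeCount_add_edgeCount_compl (G := G) (s := !s) (S ∩ T) T
  have hcompl : edgeCount G (!s) (S ∩ T) Tᶜ ≤ η := by
    rw [edgeCount_not_swap]
    exact (edgeCount_mono subset_rfl inter_subset_left).trans hη
  have hT : edgeCount G (!s) (S ∩ T) T
      = edgeCount G (!s) (S ∩ T) (S ∩ T) + edgeCount G (!s) (S ∩ T) (T \ S) := by
    rw [← edgeCount_union_right (disjoint_sdiff.mono_left inter_subset_left), inter_comm,
      union_comm, sdiff_union_inter]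
  have hself := hG.two_mul_edgeCount_self_le (!s) (S ∩ T)
  have hcross := edgeCount_le_card_mul_card (G := G) (s := !s) (S ∩ T) (T \ S)
  linarith

-- This is the previous lemma for the reversed graph, with `Tᶜ` and `Sᶜ` in place of `S` and `T`.
lemma degree_mul_card_compl_union_le (hG : IsOriented G) (hd : ∀ s x, d ≤ #(nbhd G s x))
    (hη : edgeCount G s Tᶜ S ≤ η) :
    d * #(S ∪ T)ᶜ ≤ #(S ∪ T)ᶜ * #(S ∪ T)ᶜ / 2 + #(T \ S) * #(S ∪ T)ᶜ + η := by
  have hη' : edgeCount G (!s) Sᶜᶜ Tᶜ ≤ η := by rwa [compl_compl, edgeCount_not_swap]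
  have h := degree_mul_card_inter_le (S := Tᶜ) hG hd hη'
  rwa [← compl_union, union_comm, compl_sdiff_compl] at h

lemma two_mul_degree_mul_card_sdiff_le (hG : IsOriented G) (hd : ∀ s x, d ≤ #(nbhd G s x))
    (hη : edgeCount G s Tᶜ S ≤ η) :
    2 * (d * #(S \ T)) ≤ #(S \ T) * (Fintype.card V - #(S \ T)) + 2 * η := by
  have hsub : S \ T ⊆ Tᶜ := fun x hx => mem_compl.2 (mem_sdiff.1 hx).2
  have hout := mul_card_le_edgeCount_univ (hd s) (S \ T)
  have hin := mul_card_le_edgeCount_univ (hd (!s)) (S \ T)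
  have hcross := hG.edgeCount_add_edgeCount_not_le s (S \ T) (S \ T)ᶜ
  have hself : edgeCount G s (S \ T) (S \ T) ≤ η :=
    (edgeCount_mono hsub sdiff_subset).trans hη
  have hself' : edgeCount G (!s) (S \ T) (S \ T) ≤ η := by rwa [edgeCount_not_swap]
  rw [← edgeCount_add_edgeCount_compl _ (S \ T)] at hout hin
  rw [card_compl, Nat.cast_sub (card_le_univ _)] at hcross
  linarith

lemma sub_le_half_add_of_mul_le {a c d η n : ℝ} (hn : 0 < n) (hη : 0 ≤ η) (ha : n / 9 ≤ a)
    (h : d * a ≤ a * a / 2 + c * a + η * n ^ 2) : d - 9 * η * n ≤ a / 2 + c := by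
  by_contra! hlt
  have hmul : a * (a / 2 + c) < a * (d - 9 * η * n) := mul_lt_mul_of_pos_left hlt (by linarith)
  nlinarith [mul_le_mul_of_nonneg_right ha (mul_nonneg hη hn.le)]

lemma le_quarter_or_le_eighth {α ν n b : ℝ} (hα : 0 < α) (hνα : 100 * ν ≤ α) (hn : 0 < n)
    (hb : 0 ≤ b) (h : 2 * ((3 / 8 + α) * n * b) ≤ b * (n - b) + 2 * (ν * n ^ 2)) :
    b ≤ (1 / 4 - α) * n ∨ b ≤ n / 8 := by
  by_contra! hlt
  obtain ⟨hquarter, heighth⟩ := hlt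
  have hupper : b * (b - (1 / 4 - 2 * α) * n) ≤ 2 * (ν * n ^ 2) := by linarith
  have hlower : n / 8 * (α * n) ≤ b * (b - (1 / 4 - 2 * α) * n) :=
    mul_le_mul heighth.le (by linarith) (by positivity) hb
  nlinarith [mul_pos hn hn]

/-- The four cells cut out by a set `S` and its robust neighbourhood `T` have sizes
`a = |S ∩ T|`, `b = |S \ T|`, `c = |T \ S|` and `d = |(S ∪ T)ᶜ|`. -/
lemma add_le_of_cell_bounds {α ν n a b c d : ℝ} (hα : 0 < α) (hα' : α ≤ 1 / 8) (hν : 0 < ν)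
    (hνα : 100 * ν ≤ α) (hn : 0 < n) (hb : 0 ≤ b) (hsum : a + b + c + d = n)
    (hA : (3 / 8 + α) * n * a ≤ a * a / 2 + c * a + ν * n ^ 2)
    (hD : (3 / 8 + α) * n * d ≤ d * d / 2 + c * d + ν * n ^ 2)
    (hB : 2 * ((3 / 8 + α) * n * b) ≤ b * (n - b) + 2 * (ν * n ^ 2))
    (hS : 3 / 8 * n ≤ a + b) (hS' : a + b ≤ 5 / 8 * n) : b + ν * n ≤ c := by
  by_contra! hlt
  have hαn : 0 < α * n := by positivity
  have hναn : 100 * (ν * n) ≤ α * n := by nlinarith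
  have hαn' : α * n ≤ n / 8 := by nlinarith
  have hbn := le_quarter_or_le_eighth hα hνα hn hb hB
  have hb4 : b ≤ n / 4 := by rcases hbn with h | h <;> linarith
  have hA' := sub_le_half_add_of_mul_le hn hν.le (by linarith) hA
  have hD' := sub_le_half_add_of_mul_le hn hν.le (by linarith) hD
  rcases hbn with h | h <;> linarith

lemma card_add_le_card_robustNbhd {α ν : ℝ} (hG : IsOriented G) (hα : 0 < α) (hα' : α ≤ 1 / 8)
    (hdeg : ∀ s x, (3 / 8 + α) * (Fintype.card V : ℝ) ≤ #(nbhd G s x)) (hν : 0 < ν)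
    (hνα : 100 * ν ≤ α) (hn : 0 < Fintype.card V) (hS : 3 / 8 * (Fintype.card V : ℝ) ≤ #S)
    (hS' : #S ≤ 5 / 8 * (Fintype.card V : ℝ)) :
    #S + ν * Fintype.card V ≤ #(robustNbhd G ν s S) := by
  set T := robustNbhd G ν s S
  have hη : edgeCount G s Tᶜ S ≤ ν * (Fintype.card V) ^ 2 := edgeCount_compl_robustNbhd_le hν.le S
  have hcardS : (#(S ∩ T) + #(S \ T) : ℝ) = #S := by
    exact_mod_cast card_inter_add_card_sdiff S T
  have hcardT : (#(S ∩ T) + #(T \ S) : ℝ) = #T := by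
    rw [inter_comm]; exact_mod_cast card_inter_add_card_sdiff T S
  have hcardV : (#(S ∩ T) + #(S \ T) + #(T \ S) + #(S ∪ T)ᶜ : ℝ) = Fintype.card V := by
    have hunion := card_union_add_card_inter S T
    have hcompl := card_add_card_compl (S ∪ T)
    rify at hunion hcompl
    linarith
  have hcell := add_le_of_cell_bounds hα hα' hν hνα (by exact_mod_cast hn) (Nat.cast_nonneg _)
    hcardV (degree_mul_card_inter_le hG hdeg hη) (degree_mul_card_compl_union_le hG hdeg hη)
    (two_mul_degree_mul_card_sdiff_le hG hdeg hη) (by linarith) (by linarith)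
  linarith

lemma robustNbhd_eq_univ_of_le {ν : ℝ} (hd : ∀ x, d ≤ #(nbhd G s x))
    (hS : Fintype.card V + ν * Fintype.card V ≤ d + #S) : robustNbhd G ν s S = univ := by
  refine eq_univ_of_forall fun v => mem_robustNbhd.2 ?_
  have hcard := card_inter_add_card_union (nbhd G s v) S
  have hunion : (#(nbhd G s v ∪ S) : ℝ) ≤ Fintype.card V := by exact_mod_cast card_le_univ _
  rify at hcard
  linarith [hd v]

theorem _root_.IsOriented.isExpander {α : ℝ} (hG : IsOriented G) (hα : 0 < α) (hα' : α ≤ 1 / 8)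
    (hdeg : ∀ s x, (3 / 8 + α) * (Fintype.card V : ℝ) ≤ #(nbhd G s x))
    (hn : 0 < Fintype.card V) : IsExpander G (α / 100) where
  pos := by positivity
  small := by linarith
  card_pos := hn
  degree s x := le_trans (by gcongr; linarith) (hdeg s x)
  expand s S hS := by
    rcases le_or_gt (#S : ℝ) (5 / 8 * Fintype.card V) with hS' | hS'
    · exact (min_le_right _ _).trans
        (card_add_le_card_robustNbhd hG hα hα' hdeg (by positivity) (by linarith) hn hS hS')
    · have hαn : 0 < α * Fintype.card V := by positivity
      rw [robustNbhd_eq_univ_of_le (hdeg s) (by linarith), card_univ]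
      exact min_le_left _ _

end Expansion

/-! ### Walks with a prescribed pattern -/

/-- `PatternWalk G Q a b M`: there is a walk from `a` to `b` whose `i`-th step is taken in
direction `Q[i]`. The multiset `M` records the vertices visited after `a`, so it contains `b`
unless `Q` is empty. -/
inductive PatternWalk {V : Type*} (G : V → V → Prop) : List Bool → V → V → Multiset V → Prop
  | nil (a : V) : PatternWalk G [] a a 0
  | cons {s : Bool} {Q : List Bool} {a v b : V} {M : Multiset V} :
      DirAdj G s a v → PatternWalk G Q v b M → PatternWalk G (s :: Q) a b (v ::ₘ M)

/-- The vertices from which `p` can robustly be reached along a pattern: there are linearly many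
choices for every inner vertex of the walk. -/
noncomputable def robustReach {V : Type*} [Fintype V] (G : V → V → Prop) (ν : ℝ) (p : V) :
    List Bool → Finset V
  | [] => {p}
  | [s] => nbhd G (!s) p
  | s :: s' :: σ => robustNbhd G ν s (robustReach G ν p (s' :: σ))

/-- One may choose `k` elements one after the other, each time with at least `c n` options,
in such a way that the resulting multiset always satisfies `P`. -/
def ManyChoices {V : Type*} [Fintype V] (c : ℝ) : ℕ → (Multiset V → Prop) → Prop
  | 0, P => P 0
  | k + 1, P => ∃ S : Finset V, c * (Fintype.card V : ℝ) ≤ #S ∧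
      ∀ v ∈ S, ManyChoices c k fun M => P (v ::ₘ M)

namespace PatternWalk

variable {V : Type*} {G : V → V → Prop} {Q Q' : List Bool} {a b c : V} {M M' : Multiset V}

lemma single {s : Bool} (h : DirAdj G s a b) : PatternWalk G [s] a b {b} :=
  cons h (nil b)

lemma append (h : PatternWalk G Q a b M) (h' : PatternWalk G Q' b c M') :
    PatternWalk G (Q ++ Q') a c (M + M') := by
  induction h with
  | nil a => simpa using h'
  | cons hadj _ ih => simpa using cons hadj (ih h')

lemma congr (h : PatternWalk G Q a b M) (hQ : Q = Q') (hM : M = M') :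
    PatternWalk G Q' a b M' :=
  hQ ▸ hM ▸ h

lemma of_flip (h : PatternWalk (flip G) Q a b M) : PatternWalk G (Q.map (!·)) a b M := by
  induction h with
  | nil a => exact nil a
  | cons hadj _ ih => exact cons (dirAdj_flip.1 hadj) ih

lemma card_eq (h : PatternWalk G Q a b M) : M.card = Q.length := by
  induction h with
  | nil => rfl
  | cons _ _ ih => simp [ih]

lemma map {W : Type*} {H : W → W → Prop} {f : V → W} (hf : ∀ x y, G x y → H (f x) (f y))
    (h : PatternWalk G Q a b M) : PatternWalk H Q (f a) (f b) (M.map f) := by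
  induction h with
  | nil a => exact nil _
  | cons hadj _ ih => simpa using cons (hadj.map hf) ih

end PatternWalk

namespace ManyChoices

variable {V : Type*} [Fintype V] {c c' : ℝ} {k m : ℕ} {P P' R : Multiset V → Prop}

lemma mono (h : ManyChoices c k P) (hP : ∀ M, P M → P' M) : ManyChoices c k P' := by
  induction k generalizing P P' with
  | zero => exact hP _ h
  | succ k ih =>
    obtain ⟨S, hS, h⟩ := h
    exact ⟨S, hS, fun v hv => ih (h v hv) fun M => hP _⟩

lemma mono_left (hc : c' ≤ c) (h : ManyChoices c k P) : ManyChoices c' k P := by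
  induction k generalizing P with
  | zero => exact h
  | succ k ih =>
    obtain ⟨S, hS, h⟩ := h
    exact ⟨S, le_trans (by gcongr) hS, fun v hv => ih (h v hv)⟩

lemma bind (h : ManyChoices c k P)
    (hP : ∀ M, P M → ManyChoices c m fun M' => R (M + M')) : ManyChoices c (m + k) R := by
  induction k generalizing P R with
  | zero => simpa using hP _ h
  | succ k ih =>
    obtain ⟨S, hS, h⟩ := h
    exact ⟨S, hS, fun v hv => ih (h v hv) fun M hM => by simpa using hP _ hM⟩

end ManyChoices

section Linking

variable {V : Type*} [Fintype V] {G : V → V → Prop} {ν : ℝ}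

lemma IsExpander.card_robustReach_cons (hG : IsExpander G ν) (p : V) (s : Bool) (σ : List Bool) :
    min (Fintype.card V : ℝ) ((3 / 8 + (σ.length + 1) * ν) * Fintype.card V)
      ≤ #(robustReach G ν p (s :: σ)) := by
  have hν := hG.pos
  have hνn : 0 ≤ ν * Fintype.card V := by positivity
  induction σ generalizing s with
  | nil =>
    refine (min_le_right _ _).trans (le_trans ?_ (hG.degree _ _))
    simp only [List.length_nil, Nat.cast_zero]
    linarith
  | cons s' σ ih =>
    set S := robustReach G ν p (s' :: σ)
    have hσ : 0 ≤ σ.length * (ν * Fintype.card V) := by positivity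
    have hS : 3 / 8 * (Fintype.card V : ℝ) ≤ #S :=
      le_trans (le_min (by linarith) (by linarith)) (ih s')
    refine le_trans (le_min (min_le_left _ _) ?_) (hG.expand s S hS)
    rw [List.length_cons, Nat.cast_succ]
    rcases min_le_iff.1 (ih s') with h | h
    · exact (min_le_left _ _).trans (by linarith)
    · exact (min_le_right _ _).trans (by linarith)

lemma IsExpander.robustReach_eq_univ (hG : IsExpander G ν) (p : V) {σ : List Bool}
    (hσ : 1 ≤ σ.length * ν) : robustReach G ν p σ = univ := by
  cases σ with
  | nil => norm_num at hσ
  | cons s σ =>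
    have hcard := hG.card_robustReach_cons p s σ
    rw [List.length_cons, Nat.cast_succ] at hσ
    rw [min_eq_left (le_mul_of_one_le_left (Nat.cast_nonneg _) (by linarith))] at hcard
    exact (card_eq_iff_eq_univ _).1 (le_antisymm (card_le_univ _) (by exact_mod_cast hcard))

lemma manyChoices_walk_of_mem_robustReach {p z : V} {s : Bool} {σ : List Bool}
    (hz : z ∈ robustReach G ν p (s :: σ)) :
    ManyChoices ν σ.length fun M => PatternWalk G (s :: σ) z p (p ::ₘ M) := by
  induction σ generalizing s z with
  | nil => exact .single (mem_nbhd.1 (mem_nbhd_not.1 hz))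
  | cons s' σ ih =>
    refine ⟨_, mem_robustNbhd.1 hz, fun v hv => (ih (mem_inter.1 hv).2).mono fun M hM => ?_⟩
    change PatternWalk G _ z p (p ::ₘ v ::ₘ M)
    rw [Multiset.cons_swap]
    exact .cons (mem_nbhd.1 (mem_inter.1 hv).1) hM

lemma IsExpander.manyChoices_walk (hG : IsExpander G ν) (z p : V) {σ : List Bool}
    (hσ : 1 ≤ σ.length * ν) :
    ManyChoices ν (σ.length - 1) fun M => PatternWalk G σ z p (p ::ₘ M) := by
  have hz : z ∈ robustReach G ν p σ := hG.robustReach_eq_univ p hσ ▸ mem_univ z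
  cases σ with
  | nil => norm_num at hσ
  | cons s σ => exact manyChoices_walk_of_mem_robustReach hz

end Linking

section CommonNeighbours

/-! ### Chains of vertices with many common in-neighbours -/

lemma sub_le_card_filter_mul {ι : Type*} (S : Finset ι) (f : ι → ℝ) {A B θ N : ℝ} (hθ : 0 ≤ θ)
    (hB : ∀ i ∈ S, f i ≤ B) (hS : #S ≤ N) (hA : A ≤ ∑ i ∈ S, f i) :
    A - N * θ ≤ #{i ∈ S | θ ≤ f i} * B := by
  have hlarge : ∑ i ∈ S with θ ≤ f i, f i ≤ #{i ∈ S | θ ≤ f i} * B := by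
    rw [← nsmul_eq_mul]
    exact sum_le_card_nsmul _ _ _ fun i hi => hB i (mem_filter.1 hi).1
  have hsmall : ∑ i ∈ S with ¬ θ ≤ f i, f i ≤ N * θ := by
    calc ∑ i ∈ S with ¬ θ ≤ f i, f i ≤ #{i ∈ S | ¬ θ ≤ f i} • θ :=
          sum_le_card_nsmul _ _ _ fun i hi => (not_le.1 (mem_filter.1 hi).2).le
      _ ≤ N * θ := by
          rw [nsmul_eq_mul]
          gcongr
          exact (Nat.cast_le.2 (card_filter_le _ _)).trans hS
  linarith [sum_filter_add_sum_filter_not S (fun i => θ ≤ f i) f]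

variable {V : Type*} [Fintype V] {G : V → V → Prop} {ν : ℝ}

/-- The common in-neighbours of `c` and `d`. -/
noncomputable def commonIn (G : V → V → Prop) (c d : V) : Finset V :=
  nbhd G false c ∩ nbhd G false d

lemma mem_commonIn {c d u : V} : u ∈ commonIn G c d ↔ G u c ∧ G u d := by
  simp [commonIn, mem_nbhd, DirAdj]

/-- The vertices with many out-neighbours among the vertices with many in-neighbours in `P`. -/
noncomputable def robustReturn (G : V → V → Prop) (ν : ℝ) (P : Finset V) : Finset V :=
  robustNbhd G ν true (robustNbhd G ν false P)

lemma card_add_card_le_card_inter_add (S T : Finset V) :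
    (#S + #T : ℝ) ≤ #(S ∩ T) + Fintype.card V := by
  have h := card_inter_add_card_union S T
  have hunion := card_le_univ (S ∪ T)
  exact_mod_cast (by omega : #S + #T ≤ #(S ∩ T) + Fintype.card V)

lemma IsExpander.card_sdiff_robustReturn_le (hG : IsExpander G ν) (P : Finset V) :
    #(P \ robustReturn G ν P) ≤ 3 * ν * Fintype.card V := by
  have hn : (0 : ℝ) < Fintype.card V := by exact_mod_cast hG.card_pos
  have hν := hG.pos
  have hνn : 0 < ν * Fintype.card V := by positivity
  set X := robustNbhd G ν false P
  set B := P \ robustReturn G ν P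
  have hupper : edgeCount G true B Xᶜ ≤ ν * (Fintype.card V) ^ 2 :=
    (edgeCount_mono sdiff_subset subset_rfl).trans
      (edgeCount_not_swap G false Xᶜ P ▸ edgeCount_compl_robustNbhd_le hν.le P)
  have hlower : #B • (3 / 8 * (Fintype.card V : ℝ)) ≤ edgeCount G true B Xᶜ := by
    refine card_nsmul_le_sum _ _ _ fun u hu => ?_
    have hu' := (mem_sdiff.1 hu).2
    rw [robustReturn, mem_robustNbhd, not_le] at hu'
    have hsplit := card_sdiff_add_card_inter (nbhd G true u) X
    rw [sdiff_eq_inter_compl] at hsplit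
    rify at hsplit
    linarith [hG.degree true u]
  rw [nsmul_eq_mul] at hlower
  have hB : #B * (3 / 8) ≤ ν * Fintype.card V := le_of_mul_le_mul_right (by nlinarith) hn
  linarith

lemma card_inter_le_of_large_inter (hG : IsExpander G ν) {P P' : Finset V}
    (hPP' : 7 * (ν * Fintype.card V) ≤ #(P ∩ P')) :
    ν * Fintype.card V ≤ #(robustReturn G ν P ∩ robustReturn G ν P') := by
  have hsub : P ∩ P' ⊆ (robustReturn G ν P ∩ robustReturn G ν P') ∪
      ((P \ robustReturn G ν P) ∪ (P' \ robustReturn G ν P')) := by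
    intro v
    simp only [mem_inter, mem_union, mem_sdiff]
    tauto
  have hcard := (card_le_card hsub).trans ((card_union_le _ _).trans
    (Nat.add_le_add_left (card_union_le _ _) _))
  rify at hcard
  linarith [hG.card_sdiff_robustReturn_le P, hG.card_sdiff_robustReturn_le P']

lemma robustNbhd_union_robustNbhd_eq_univ (hG : IsExpander G ν) {P P' : Finset V}
    (hP : 3 / 8 * (Fintype.card V : ℝ) ≤ #P) (hP' : 3 / 8 * (Fintype.card V : ℝ) ≤ #P')
    (hPP' : #(P ∩ P') ≤ 7 * (ν * Fintype.card V)) :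
    robustNbhd G ν false P ∪ robustNbhd G ν false P' = univ := by
  refine eq_univ_of_forall fun v => ?_
  by_contra hv
  simp only [mem_union, not_or, mem_robustNbhd, not_le] at hv
  have hn : (0 : ℝ) < Fintype.card V := by exact_mod_cast hG.card_pos
  have hinter : #(nbhd G false v ∩ (P ∪ P')) ≤ #(nbhd G false v ∩ P) + #(nbhd G false v ∩ P') := by
    rw [inter_union_distrib_left]
    exact card_union_le _ _
  have hunion := card_inter_add_card_union P P'
  rify at hinter hunion
  nlinarith [hG.small, hG.degree false v, card_add_card_le_card_inter_add (nbhd G false v) (P ∪ P')]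

lemma card_inter_le_of_small_inter (hG : IsExpander G ν) {P P' : Finset V}
    (hP : 3 / 8 * (Fintype.card V : ℝ) ≤ #P) (hP' : 3 / 8 * (Fintype.card V : ℝ) ≤ #P')
    (hPP' : #(P ∩ P') ≤ 7 * (ν * Fintype.card V)) :
    ν * Fintype.card V ≤ #(robustReturn G ν P ∩ robustReturn G ν P') := by
  have hn : (0 : ℝ) < Fintype.card V := by exact_mod_cast hG.card_pos
  have hνn : 0 < ν * Fintype.card V := mul_pos hG.pos hn
  have hνn' : ν * Fintype.card V ≤ 1 / 800 * Fintype.card V := by gcongr; exact hG.small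
  have hcover := card_union_le (robustNbhd G ν false P) (robustNbhd G ν false P')
  rw [robustNbhd_union_robustNbhd_eq_univ hG hP hP' hPP', card_univ] at hcover
  rify at hcover
  have hgrow {S : Finset V} (hS : 3 / 8 * (Fintype.card V : ℝ) ≤ #S) :
      3 / 8 * (Fintype.card V : ℝ) ≤ #(robustNbhd G ν false S) :=
    le_trans (le_min (by linarith) (by linarith)) (hG.expand false S hS)
  have hU := hG.expand true _ (hgrow hP)
  have hU' := hG.expand true _ (hgrow hP')
  have hinter := card_add_card_le_card_inter_add (robustReturn G ν P) (robustReturn G ν P')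
  unfold robustReturn at hinter ⊢
  rcases min_le_iff.1 hU with h | h <;> rcases min_le_iff.1 hU' with h' | h' <;> linarith

lemma IsExpander.card_robustReturn_inter (hG : IsExpander G ν) (x y : V) :
    ν * Fintype.card V
      ≤ #(robustReturn G ν (nbhd G false x) ∩ robustReturn G ν (nbhd G false y)) := by
  have hdeg (z : V) : 3 / 8 * (Fintype.card V : ℝ) ≤ #(nbhd G false z) :=
    le_trans (by gcongr; linarith [hG.pos]) (hG.degree false z)
  rcases le_total (7 * (ν * Fintype.card V)) (#(nbhd G false x ∩ nbhd G false y) : ℝ) with h | h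
  · exact card_inter_le_of_large_inter hG h
  · exact card_inter_le_of_small_inter hG (hdeg x) (hdeg y) h

lemma sum_sum_card_commonIn (G : V → V → Prop) (X Y : Finset V) :
    ∑ c ∈ X, ∑ d ∈ Y, #(commonIn G c d) = ∑ u, #(nbhd G true u ∩ X) * #(nbhd G true u ∩ Y) := by
  have hcard (u : V) (Z : Finset V) : #(nbhd G true u ∩ Z) = ∑ c ∈ Z, if G u c then 1 else 0 := by
    rw [sum_boole, Nat.cast_id]
    congr 1
    ext c
    simp [mem_nbhd, DirAdj, and_comm]
  have hcommon (c d : V) :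
      #(commonIn G c d) = ∑ u, (if G u c then 1 else 0) * if G u d then 1 else 0 := by
    simp only [ite_zero_mul_ite_zero, mul_one, sum_boole, Nat.cast_id]
    congr 1
    ext u
    simp [mem_commonIn]
  simp only [hcard, hcommon, sum_mul_sum]
  exact sum_comm_cycle

lemma IsExpander.le_sum_sum_card_commonIn (hG : IsExpander G ν) (x y : V) :
    (ν * Fintype.card V) ^ 3 ≤ ∑ c ∈ robustNbhd G ν false (nbhd G false x),
      ∑ d ∈ robustNbhd G ν false (nbhd G false y), (#(commonIn G c d) : ℝ) := by
  have hν := hG.pos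
  have hU := hG.card_robustReturn_inter x y
  set X := robustNbhd G ν false (nbhd G false x)
  set Y := robustNbhd G ν false (nbhd G false y)
  set U := robustReturn G ν (nbhd G false x) ∩ robustReturn G ν (nbhd G false y)
  have hterm (u) (hu : u ∈ U) :
      (ν * Fintype.card V) ^ 2 ≤ (#(nbhd G true u ∩ X) * #(nbhd G true u ∩ Y) : ℝ) := by
    rw [sq]
    exact mul_le_mul (mem_robustNbhd.1 (mem_inter.1 hu).1) (mem_robustNbhd.1 (mem_inter.1 hu).2)
      (by positivity) (Nat.cast_nonneg _)
  calc (ν * Fintype.card V) ^ 3 = ν * Fintype.card V * (ν * Fintype.card V) ^ 2 := by ring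
    _ ≤ #U * (ν * Fintype.card V) ^ 2 := by gcongr
    _ ≤ ∑ u ∈ U, (#(nbhd G true u ∩ X) * #(nbhd G true u ∩ Y) : ℝ) := by
        rw [← nsmul_eq_mul]
        exact card_nsmul_le_sum _ _ _ hterm
    _ ≤ ∑ u, (#(nbhd G true u ∩ X) * #(nbhd G true u ∩ Y) : ℝ) :=
        sum_le_univ_sum_of_nonneg fun u => by positivity
    _ = _ := by exact_mod_cast (sum_sum_card_commonIn G X Y).symm

lemma IsExpander.cube_div_three_le (hG : IsExpander G ν) : ν ^ 3 / 3 ≤ ν := by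
  nlinarith [pow_pos hG.pos 2, hG.pos, hG.small]

theorem IsExpander.exists_chain (hG : IsExpander G ν) (x y : V) :
    ∃ C : Finset V, ν ^ 3 / 3 * (Fintype.card V : ℝ) ≤ #C ∧ ∀ c ∈ C,
      ν ^ 3 / 3 * (Fintype.card V : ℝ) ≤ #(commonIn G x c) ∧
      ∃ D : Finset V, ν ^ 3 / 3 * (Fintype.card V : ℝ) ≤ #D ∧ ∀ d ∈ D,
        ν ^ 3 / 3 * (Fintype.card V : ℝ) ≤ #(commonIn G c d) ∧
        ν ^ 3 / 3 * (Fintype.card V : ℝ) ≤ #(commonIn G d y) := by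
  have hν := hG.pos
  have hν3 : ν ^ 3 / 3 * (Fintype.card V : ℝ) ≤ ν * Fintype.card V := by
    gcongr
    exact hG.cube_div_three_le
  have hsum := hG.le_sum_sum_card_commonIn x y
  set X := robustNbhd G ν false (nbhd G false x)
  set Y := robustNbhd G ν false (nbhd G false y)
  have hle (S : Finset V) : (#S : ℝ) ≤ Fintype.card V := by exact_mod_cast card_le_univ S
  set n : ℝ := (Fintype.card V : ℝ)
  have hn : 0 < n := Nat.cast_pos.2 hG.card_pos
  have hrow (c) (_ : c ∈ X) : ∑ d ∈ Y, (#(commonIn G c d) : ℝ) ≤ n * n := by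
    refine (sum_le_card_nsmul _ _ _ fun d _ => hle (commonIn G c d)).trans ?_
    rw [nsmul_eq_mul]
    gcongr
    exact hle Y
  refine ⟨{c ∈ X | 2 / 3 * ν ^ 3 * n ^ 2 ≤ ∑ d ∈ Y, (#(commonIn G c d) : ℝ)}, ?_,
    fun c hc => ⟨?_, {d ∈ Y | ν ^ 3 / 3 * n ≤ #(commonIn G c d)}, ?_, fun d hd =>
      ⟨(mem_filter.1 hd).2, ?_⟩⟩⟩
  · have h := sub_le_card_filter_mul X _ (θ := 2 / 3 * ν ^ 3 * n ^ 2) (by positivity) hrow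
      (hle X) hsum
    exact le_of_mul_le_mul_right (by linarith) (mul_pos hn hn)
  · rw [commonIn, inter_comm]
    exact hν3.trans (mem_robustNbhd.1 (mem_filter.1 hc).1)
  · have h := sub_le_card_filter_mul Y _ (θ := ν ^ 3 / 3 * n) (by positivity)
      (fun d _ => hle (commonIn G c d)) (hle Y) (mem_filter.1 hc).2
    exact le_of_mul_le_mul_right (by linarith) hn
  · exact hν3.trans (mem_robustNbhd.1 (mem_filter.1 hd).1)

end CommonNeighbours

section Patterns

lemma exists_append_of_length {α : Type*} {m k : ℕ} {L : List α} (hL : L.length = m + k) :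
    ∃ A B : List α, L = A ++ B ∧ A.length = m ∧ B.length = k :=
  ⟨L.take m, L.drop m, (List.take_append_drop m L).symm, by simp [hL], by simp [hL]⟩

lemma exists_turn_or_eq_replicate_append (L : List Bool) :
    (∃ σ τ, L = σ ++ [true, false] ++ τ) ∨
      ∃ a b, L = List.replicate a false ++ List.replicate b true := by
  induction L with
  | nil => exact Or.inr ⟨0, 0, rfl⟩
  | cons s L ih =>
    rcases ih with ⟨σ, τ, rfl⟩ | ⟨a, b, rfl⟩
    · exact Or.inl ⟨s :: σ, τ, by simp⟩
    · rcases s with _ | _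
      · exact Or.inr ⟨a + 1, b, by simp [List.replicate_succ]⟩
      · cases a with
        | zero => exact Or.inr ⟨0, b + 1, by simp [List.replicate_succ]⟩
        | succ a =>
          exact Or.inl ⟨[], List.replicate a false ++ List.replicate b true,
            by simp [List.replicate_succ]⟩

lemma exists_turn_or_replicate (l R : ℕ) {L : List Bool} (hL : L.length = l + 2 * R + l) :
    (∃ σ τ, L = σ ++ [true, false] ++ τ ∧ l ≤ σ.length ∧ l ≤ τ.length) ∨
      ∃ s σ τ, L = σ ++ List.replicate R s ++ τ ∧ l ≤ σ.length ∧ l ≤ τ.length := by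
  obtain ⟨AB, C, rfl, hAB, hC⟩ := exists_append_of_length hL
  obtain ⟨A, B, rfl, hA, hB⟩ := exists_append_of_length hAB
  rcases exists_turn_or_eq_replicate_append B with ⟨σ, τ, rfl⟩ | ⟨a, b, rfl⟩
  · exact Or.inl ⟨A ++ σ, τ ++ C, by simp, by simp; omega, by simp; omega⟩
  · right
    simp only [List.length_append, List.length_replicate] at hB
    rcases le_or_gt R a with h | h
    · obtain ⟨a, rfl⟩ := Nat.exists_eq_add_of_le h
      exact ⟨false, A, List.replicate a false ++ List.replicate b true ++ C,
        by simp [← List.replicate_append_replicate], hA.ge, by simp; omega⟩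
    · obtain ⟨b, rfl⟩ := Nat.exists_eq_add_of_le (by omega : R ≤ b)
      exact ⟨true, A ++ List.replicate a false, List.replicate b true ++ C,
        by simp [← List.replicate_append_replicate], by simp; omega, by simp; omega⟩

end Patterns

section Absorbers

/-! ### Absorbers -/

variable {V : Type*} [Fintype V] {G : V → V → Prop} {ν : ℝ}

/-- The pattern `Q` absorbs `x` for `y` between `a` and `b`: it can be traversed from `a` to `b` in
many ways for which a second walk with the same pattern and ends visits the same vertices, except
that `y` is replaced by `x`. -/
def Absorbs (G : V → V → Prop) (c : ℝ) (Q : List Bool) (a b x y : V) : Prop :=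
  ManyChoices c (Q.length - 2) fun M =>
    PatternWalk G Q a b (y ::ₘ b ::ₘ M) ∧ PatternWalk G Q a b (x ::ₘ b ::ₘ M)

lemma length_pos_of_one_le_mul {σ : List Bool} (h : 1 ≤ σ.length * ν) : 1 ≤ σ.length := by
  rw [Nat.one_le_iff_ne_zero]
  rintro h0
  norm_num [h0] at h

-- With `uᵢ, wᵢ` common in-neighbours along the chain `x, c, d, y`, the three turns visit
-- `c, d, y` in one walk and `x, c, d` in the other.
lemma IsExpander.absorbs_of_turns (hG : IsExpander G ν) {σ₀ σ₁ σ₂ σ₃ : List Bool}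
    (h₀ : 1 ≤ σ₀.length * ν) (h₁ : 1 ≤ σ₁.length * ν) (h₂ : 1 ≤ σ₂.length * ν)
    (h₃ : 1 ≤ σ₃.length * ν) (a b x y : V) :
    Absorbs G (ν ^ 3 / 3)
      (σ₀ ++ [true, false] ++ σ₁ ++ [true, false] ++ σ₂ ++ [true, false] ++ σ₃) a b x y := by
  have hlink {σ : List Bool} (z p : V) (hσ : 1 ≤ σ.length * ν) :=
    (hG.manyChoices_walk z p hσ).mono_left hG.cube_div_three_le
  have hlength : (σ₀ ++ [true, false] ++ σ₁ ++ [true, false] ++ σ₂ ++ [true, false]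
      ++ σ₃).length - 2 = (σ₃.length - 1) + (σ₂.length - 1) + (σ₁.length - 1) +
        (σ₀.length - 1) + 8 := by
    have := length_pos_of_one_le_mul h₀
    have := length_pos_of_one_le_mul h₁
    have := length_pos_of_one_le_mul h₂
    have := length_pos_of_one_le_mul h₃
    simp only [List.length_append, List.length_cons, List.length_nil]
    omega
  rw [Absorbs, hlength]
  obtain ⟨C, hC, hchain⟩ := hG.exists_chain x y
  refine ⟨C, hC, fun c hc => ?_⟩
  obtain ⟨hxc, D, hD, hchain⟩ := hchain c hc
  refine ⟨D, hD, fun d hd => ?_⟩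
  obtain ⟨hcd, hdy⟩ := hchain d hd
  refine ⟨_, hxc, fun u₁ hu₁ => ⟨_, hxc, fun w₁ hw₁ => ⟨_, hcd, fun u₂ hu₂ =>
    ⟨_, hcd, fun w₂ hw₂ => ⟨_, hdy, fun u₃ hu₃ => ⟨_, hdy, fun w₃ hw₃ => ?_⟩⟩⟩⟩⟩⟩
  rw [mem_commonIn] at hu₁ hw₁ hu₂ hw₂ hu₃ hw₃
  refine (hlink a u₁ h₀).bind fun L₀ hL₀ => (hlink w₁ u₂ h₁).bind fun L₁ hL₁ =>
    (hlink w₂ u₃ h₂).bind fun L₂ hL₂ => (hlink w₃ b h₃).mono fun L₃ hL₃ => ?_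
  have turn {u t w : V} (hu : G u t) (hw : G w t) : PatternWalk G [true, false] u w (t ::ₘ {w}) :=
    .cons hu (.single hw)
  constructor
  · refine ((((((hL₀.append (turn hu₁.2 hw₁.2)).append hL₁).append (turn hu₂.2 hw₂.2)).append
      hL₂).append (turn hu₃.2 hw₃.2)).append hL₃).congr rfl ?_
    simp only [← Multiset.singleton_add]
    abel
  · refine ((((((hL₀.append (turn hu₁.1 hw₁.1)).append hL₁).append (turn hu₂.1 hw₂.1)).append
      hL₂).append (turn hu₃.1 hw₃.1)).append hL₃).congr rfl ?_
    simp only [← Multiset.singleton_add]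
    abel

lemma IsExpander.manyChoices_chain (hG : IsExpander G ν) (x y : V) :
    ManyChoices (ν ^ 3 / 3) 5 fun M => ∃ c d u v w, M = {c, d, u, v, w} ∧
      (G u x ∧ G u c) ∧ (G v c ∧ G v d) ∧ (G w d ∧ G w y) := by
  obtain ⟨C, hC, hchain⟩ := hG.exists_chain x y
  refine ⟨C, hC, fun c hc => ?_⟩
  obtain ⟨hxc, D, hD, hchain⟩ := hchain c hc
  refine ⟨D, hD, fun d hd => ?_⟩
  obtain ⟨hcd, hdy⟩ := hchain d hd
  exact ⟨_, hxc, fun u hu => ⟨_, hcd, fun v hv => ⟨_, hdy, fun w hw => ⟨c, d, u, v, w, rfl,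
    mem_commonIn.1 hu, mem_commonIn.1 hv, mem_commonIn.1 hw⟩⟩⟩⟩

-- A chain `x, c, d, y` with common in-neighbours `u, v, w` and a chain `x, c', d', y` with common
-- out-neighbours `u', v', w'` turn the four links `d ⇝ u`, `u' ⇝ d'`, `w' ⇝ v`, `c ⇝ c'` into two
-- directed walks from `w` to `v'`: `w y w' ⇝ v d ⇝ u c ⇝ c' u' ⇝ d' v'` and
-- `w d ⇝ u x u' ⇝ d' w' ⇝ v c ⇝ c' v'`.
lemma IsExpander.absorbs_replicate_true (hG : IsExpander G ν) {l : ℕ} {σ τ : List Bool}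
    (hl : 1 ≤ l * ν) (hσ : 1 ≤ σ.length * ν) (hτ : 1 ≤ τ.length * ν) (a b x y : V) :
    Absorbs G (ν ^ 3 / 3) (σ ++ List.replicate (4 * l + 6) true ++ τ) a b x y := by
  have hlink {σ : List Bool} (z p : V) (hσ : 1 ≤ σ.length * ν) :=
    (hG.manyChoices_walk z p hσ).mono_left hG.cube_div_three_le
  set ρ := List.replicate l true
  have hρ : 1 ≤ (ρ.length : ℝ) * ν := by simpa [ρ] using hl
  have hlength : (σ ++ List.replicate (4 * l + 6) true ++ τ).length - 2 =
      (τ.length - 1) + (ρ.length - 1) + (ρ.length - 1) + (ρ.length - 1) + (ρ.length - 1) +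
        (σ.length - 1) + 5 + 5 := by
    have := length_pos_of_one_le_mul hσ
    have := length_pos_of_one_le_mul hτ
    have := length_pos_of_one_le_mul hρ
    simp only [ρ, List.length_append, List.length_replicate] at *
    omega
  rw [Absorbs, hlength]
  refine (hG.manyChoices_chain x y).bind ?_
  rintro _ ⟨c, d, u, v, w, rfl, ⟨hux, huc⟩, ⟨hvc, hvd⟩, hwd, hwy⟩
  refine (hG.flip.manyChoices_chain x y).bind ?_
  rintro _ ⟨c', d', u', v', w', rfl, ⟨hxu, hcu⟩, ⟨hcv, hdv⟩, hdw, hyw⟩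
  refine (hlink a w hσ).bind fun L hL => (hlink d u hρ).bind fun P hP =>
    (hlink u' d' hρ).bind fun P' hP' => (hlink w' v hρ).bind fun R hR =>
    (hlink c c' hρ).bind fun R' hR' => (hlink v' b hτ).mono fun L' hL' => ?_
  have step {u v : V} (h : G u v) : PatternWalk G (List.replicate 1 true) u v {v} := .single h
  constructor
  · refine ((hL.append ((((((((((step hwy).append (step hyw)).append hR).append
      (step hvd)).append hP).append (step huc)).append hR').append (step hcu)).append
      hP').append (step hdv))).append hL').congr ?_ ?_
    · simp only [ρ, List.replicate_append_replicate]
      congr 3; omega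
    · simp only [Multiset.insert_eq_cons, ← Multiset.singleton_add]
      abel
  · refine ((hL.append ((((((((((step hwd).append hP).append (step hux)).append
      (step hxu)).append hP').append (step hdw)).append hR).append (step hvc)).append
      hR').append (step hcv))).append hL').congr ?_ ?_
    · simp only [ρ, List.replicate_append_replicate]
      congr 3; omega
    · simp only [Multiset.insert_eq_cons, ← Multiset.singleton_add]
      abel

lemma IsExpander.absorbs_replicate (hG : IsExpander G ν) {l : ℕ} {σ τ : List Bool}
    (hl : 1 ≤ l * ν) (hσ : 1 ≤ σ.length * ν) (hτ : 1 ≤ τ.length * ν) (s : Bool) (a b x y : V) :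
    Absorbs G (ν ^ 3 / 3) (σ ++ List.replicate (4 * l + 6) s ++ τ) a b x y := by
  cases s with
  | true => exact hG.absorbs_replicate_true hl hσ hτ a b x y
  | false =>
    have hflip := hG.flip.absorbs_replicate_true (l := l) (σ := σ.map (!·)) (τ := τ.map (!·)) hl
      (by simpa using hσ) (by simpa using hτ) a b x y
    have hmap : (σ.map (!·) ++ List.replicate (4 * l + 6) true ++ τ.map (!·)).map (!·) =
        σ ++ List.replicate (4 * l + 6) false ++ τ := by
      simp [Function.comp_def]
    rw [Absorbs, ← hmap, List.length_map]
    exact hflip.mono fun M hM => ⟨hM.1.of_flip, hM.2.of_flip⟩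

/-- The length of the absorbing patterns: three windows, each made of two links of length `l` and
of a part of length `2 (4 l + 6)`, long enough for a turn or a constant run of length `4 l + 6`. -/
def absorberLength (l : ℕ) : ℕ := 3 * (l + 2 * (4 * l + 6) + l)

theorem IsExpander.absorbs (hG : IsExpander G ν) {l : ℕ} (hl : 1 ≤ l * ν) {Q : List Bool}
    (hQ : Q.length = absorberLength l) (a b x y : V) : Absorbs G (ν ^ 3 / 3) Q a b x y := by
  have hlen {k : ℕ} (h : l ≤ k) : 1 ≤ (k : ℝ) * ν :=
    hl.trans (mul_le_mul_of_nonneg_right (Nat.cast_le.2 h) hG.pos.le)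
  obtain ⟨A, BC, rfl, hA, hBC⟩ :=
    exists_append_of_length (hQ.trans (Nat.succ_mul 2 _ ▸ add_comm _ _))
  obtain ⟨B, C, rfl, hB, hC⟩ := exists_append_of_length (hBC.trans (two_mul _))
  rcases exists_turn_or_replicate l _ hA with ⟨σ₁, τ₁, rfl, hσ₁, hτ₁⟩ | ⟨s, σ, τ, rfl, hσ, hτ⟩
  swap
  · simpa only [List.append_assoc] using hG.absorbs_replicate hl (hlen hσ) (τ := τ ++ (B ++ C))
      (hlen (by simp; omega)) s a b x y
  rcases exists_turn_or_replicate l _ hB with ⟨σ₂, τ₂, rfl, hσ₂, hτ₂⟩ | ⟨s, σ, τ, rfl, hσ, hτ⟩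
  swap
  · simpa only [List.append_assoc] using hG.absorbs_replicate hl
      (σ := σ₁ ++ [true, false] ++ τ₁ ++ σ) (τ := τ ++ C)
      (hlen (by simp; omega)) (hlen (by simp; omega)) s a b x y
  rcases exists_turn_or_replicate l _ hC with ⟨σ₃, τ₃, rfl, hσ₃, hτ₃⟩ | ⟨s, σ, τ, rfl, hσ, hτ⟩
  swap
  · simpa only [List.append_assoc] using hG.absorbs_replicate hl
      (σ := σ₁ ++ [true, false] ++ τ₁ ++ (σ₂ ++ [true, false] ++ τ₂) ++ σ) (τ := τ)
      (hlen (by simp; omega)) (hlen hτ) s a b x y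
  simpa only [List.append_assoc] using hG.absorbs_of_turns (σ₁ := τ₁ ++ σ₂) (σ₂ := τ₂ ++ σ₃)
    (hlen hσ₁) (hlen (by simp; omega)) (hlen (by simp; omega)) (hlen hτ₃) a b x y

end Absorbers

section Counting

/-! ### Counting and selecting absorbers -/

variable {V : Type*}

/-- `M` has no repeated elements and avoids `W`. -/
def Fresh (W : Finset V) (M : Multiset V) : Prop :=
  M.Nodup ∧ ∀ v ∈ M, v ∉ W

lemma Fresh.cons {W : Finset V} {v : V} {M : Multiset V} (hv : v ∉ W)
    (h : Fresh (insert v W) M) : Fresh W (v ::ₘ M) := by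
  refine ⟨Multiset.nodup_cons.2 ⟨fun hM => h.2 v hM (mem_insert_self _ _), h.1⟩, ?_⟩
  rintro u hu
  rcases Multiset.mem_cons.1 hu with rfl | hu
  · exact hv
  · exact fun hW => h.2 u hu (mem_insert_of_mem hW)

lemma Fresh.add {W : Finset V} {M N : Multiset V} (h : Fresh W M)
    (h' : Fresh (W ∪ M.toFinset) N) : Fresh W (M + N) := by
  refine ⟨Multiset.nodup_add.2 ⟨h.1, h'.1, Multiset.disjoint_left.2 fun hv hv' =>
    h'.2 _ hv' (mem_union_right _ (Multiset.mem_toFinset.2 hv))⟩, fun v hv => ?_⟩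
  rcases Multiset.mem_add.1 hv with hv | hv
  · exact h.2 v hv
  · exact fun hW => h'.2 v hv (mem_union_left _ hW)

/-- The multiset of entries of a tuple. -/
def entries {k : ℕ} (t : Fin k → V) : Multiset V :=
  (List.ofFn t : Multiset V)

lemma entries_cons {k : ℕ} (v : V) (t : Fin k → V) :
    entries (Fin.cons v t : Fin (k + 1) → V) = v ::ₘ entries t := by
  simp [entries]

lemma card_sub_card_le_card_sdiff (S W : Finset V) : (#S - #W : ℝ) ≤ #(S \ W) := by
  have h := le_card_sdiff W S
  rw [sub_le_iff_le_add]
  exact_mod_cast Nat.sub_le_iff_le_add.1 h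

variable [Fintype V] {c : ℝ} {k : ℕ}

lemma mul_le_card_filter_prod {α : Type*} [Fintype α] {S W : Finset V} {B : ℝ}
    {R : V × α → Prop} [DecidablePred R] (hB : 0 ≤ B) (hS : c * (Fintype.card V : ℝ) ≤ #S)
    (hW : #W ≤ c / 2 * (Fintype.card V : ℝ)) (h : ∀ v ∈ S \ W, B ≤ #{t | R (v, t)}) :
    c / 2 * Fintype.card V * B ≤ #{p | R p} := by
  have hcard : c / 2 * Fintype.card V ≤ #(S \ W) := by
    linarith [card_sub_card_le_card_sdiff S W]
  calc c / 2 * Fintype.card V * B ≤ #(S \ W) • B := by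
        rw [nsmul_eq_mul]
        gcongr
    _ ≤ ∑ v ∈ S \ W, (#{t | R (v, t)} : ℝ) := card_nsmul_le_sum _ _ _ h
    _ ≤ ∑ v, (#{t | R (v, t)} : ℝ) := sum_le_univ_sum_of_nonneg fun _ => Nat.cast_nonneg _
    _ = #{p | R p} := by
        simp only [← sum_boole, Fintype.sum_prod_type]

lemma ManyChoices.pow_le_card (hc : 0 ≤ c) {P : Multiset V → Prop} [DecidablePred P]
    (h : ManyChoices c k P) {W : Finset V} (hW : #W + k ≤ c / 2 * (Fintype.card V : ℝ)) :
    (c / 2 * (Fintype.card V : ℝ)) ^ k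
      ≤ #{t : Fin k → V | P (entries t) ∧ Fresh W (entries t)} := by
  induction k generalizing P W with
  | zero =>
    have hP : P 0 := h
    simp [entries, hP, Fresh]
  | succ k ih =>
    obtain ⟨S, hS, h⟩ := h
    rw [Nat.cast_succ] at hW
    have hcard : #{t : Fin (k + 1) → V | P (entries t) ∧ Fresh W (entries t)} =
        #{p : V × (Fin k → V) | P (p.1 ::ₘ entries p.2) ∧ Fresh W (p.1 ::ₘ entries p.2)} :=
      (card_equiv (Fin.consEquiv fun _ => V) fun p => by
        rw [mem_filter_univ, mem_filter_univ]
        exact (entries_cons p.1 p.2).symm ▸ Iff.rfl).symm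
    rw [hcard, pow_succ']
    have hk : (0 : ℝ) ≤ k := k.cast_nonneg
    refine mul_le_card_filter_prod (W := W) (by positivity) hS (by linarith) fun v hv => ?_
    have hinsert : (#(insert v W) : ℝ) ≤ #W + 1 := by exact_mod_cast card_insert_le v W
    refine (ih (h v (mem_sdiff.1 hv).1) (W := insert v W) (by linarith)).trans ?_
    refine Nat.cast_le.2 (card_le_card (monotone_filter_right _ fun t _ ht => ?_))
    exact ⟨ht.1, ht.2.cons (mem_sdiff.1 hv).2⟩

/-- The walk with vertices `y ::ₘ M` and pattern `Q` from `a` to `b` can be rerouted through `x`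
instead of `y`, thereby releasing a vertex `y` of `U`. -/
def Hits (G : V → V → Prop) (Q : List Bool) (a b y : V) (M : Multiset V) (x : V)
    (U : Finset V) : Prop :=
  y ∈ U ∧ PatternWalk G Q a b (x ::ₘ M)

lemma exists_mul_sum_le_sum_filter {α ι : Type*} [Fintype ι] {S : Finset α} (hS : S.Nonempty)
    (H : α → ι → Prop) {w : ι → ℝ} (hw : ∀ i, 0 ≤ w i) {ρ : ℝ}
    (hρ : ∀ i, ρ * #S ≤ #{p ∈ S | H p i}) :
    ∃ p ∈ S, ρ * ∑ i, w i ≤ ∑ i with H p i, w i := by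
  refine exists_le_of_sum_le hS ?_
  calc ∑ _p ∈ S, ρ * ∑ i, w i = ∑ i, w i * (ρ * #S) := by
        rw [sum_const, nsmul_eq_mul, ← sum_mul]
        ring
    _ ≤ ∑ i, w i * #{p ∈ S | H p i} :=
        sum_le_sum fun i _ => mul_le_mul_of_nonneg_left (hρ i) (hw i)
    _ = ∑ p ∈ S, ∑ i with H p i, w i := by
        simp only [sum_filter]
        rw [sum_comm]
        simp only [← sum_filter, sum_const, nsmul_eq_mul, mul_comm]

/-- The tuples `(y, b, t)` for which there is a walk from `a` to `b` with pattern `Q` whose vertices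
after `a` are `y`, `b` and the entries of `t`, all distinct and outside `W`. -/
noncomputable def freshSegments (G : V → V → Prop) (Q : List Bool) (a : V) (W : Finset V) (k : ℕ) :
    Finset (V × V × (Fin k → V)) :=
  {p | Fresh W (p.1 ::ₘ p.2.1 ::ₘ entries p.2.2) ∧
    PatternWalk G Q a p.2.1 (p.1 ::ₘ p.2.1 ::ₘ entries p.2.2)}

variable {G : V → V → Prop}

lemma card_freshSegments_le (G : V → V → Prop) (Q : List Bool) (a : V) (W : Finset V) (k : ℕ) :
    #(freshSegments G Q a W k) ≤ Fintype.card V ^ (k + 2) := by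
  refine (card_le_univ _).trans_eq ?_
  simp only [Fintype.card_prod, Fintype.card_fun, Fintype.card_fin]
  ring

lemma pow_le_card_freshSegments (hc : 0 ≤ c) (hc' : c ≤ 1) {Q : List Bool}
    (hQ : Q.length = k + 2) {a x : V} (habs : ∀ b y, Absorbs G c Q a b x y) {U W : Finset V}
    (hU : c * (Fintype.card V : ℝ) ≤ #U)
    (hW : #W + (k + 2) ≤ c / 2 * (Fintype.card V : ℝ)) :
    (c / 2 * (Fintype.card V : ℝ)) ^ (k + 2) ≤ #{p ∈ freshSegments G Q a W k |
      Hits G Q a p.2.1 p.1 (p.2.1 ::ₘ entries p.2.2) x U} := by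
  have hn : (0 : ℝ) ≤ Fintype.card V := Nat.cast_nonneg _
  have hinsert (v : V) (S : Finset V) : (#(insert v S) : ℝ) ≤ #S + 1 := by
    exact_mod_cast card_insert_le v S
  rw [freshSegments, filter_filter, pow_succ', pow_succ']
  refine mul_le_card_filter_prod (W := W) (by positivity) hU (by linarith) fun y hy => ?_
  have huniv : c * (Fintype.card V : ℝ) ≤ #(univ : Finset V) := by
    rw [card_univ]
    exact mul_le_of_le_one_left hn hc'
  refine mul_le_card_filter_prod (W := insert y W) (by positivity) huniv
    (by linarith [hinsert y W]) fun b hb => ?_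
  have hchoices := habs b y
  rw [Absorbs, hQ, Nat.add_sub_cancel] at hchoices
  refine (hchoices.pow_le_card hc (W := insert b (insert y W))
    (by linarith [hinsert b (insert y W), hinsert y W])).trans ?_
  refine Nat.cast_le.2 (card_le_card (monotone_filter_right _ fun t _ ht => ?_))
  exact ⟨⟨(ht.2.cons (mem_sdiff.1 hb).2).cons (mem_sdiff.1 hy).2, ht.1.1⟩,
    (mem_sdiff.1 hy).1, ht.1.2⟩

end Counting

section Selection

variable {V : Type*} [Fintype V] {G : V → V → Prop} {c : ℝ} {k : ℕ} {ι : Type*} [Fintype ι]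
  {x : ι → V} {U : ι → Finset V}

lemma exists_absorber (hc : 0 < c) (hc' : c ≤ 1) (hn : 0 < Fintype.card V) {Q : List Bool}
    (hQ : Q.length = k + 2) {a : V} (habs : ∀ b x y, Absorbs G c Q a b x y)
    (hU : ∀ i, c * (Fintype.card V : ℝ) ≤ #(U i)) {w : ι → ℝ} (hw : ∀ i, 0 ≤ w i)
    {W : Finset V} (hW : #W + (k + 2) ≤ c / 2 * (Fintype.card V : ℝ)) :
    ∃ (y b : V) (M : Multiset V), Fresh W (y ::ₘ M) ∧ PatternWalk G Q a b (y ::ₘ M) ∧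
      (c / 2) ^ (k + 2) * ∑ i, w i ≤ ∑ i with Hits G Q a b y M (x i) (U i), w i := by
  have hcount (x : V) {U : Finset V} (hU : c * (Fintype.card V : ℝ) ≤ #U) :=
    pow_le_card_freshSegments hc.le hc' hQ (fun b => habs b x) hU hW
  have hne : (freshSegments G Q a W k).Nonempty := by
    have hpos := (pow_pos (by positivity) _).trans_le (hcount a (U := univ) (by
      rw [card_univ]
      exact mul_le_of_le_one_left (Nat.cast_nonneg _) hc'))
    exact (card_pos.1 (Nat.cast_pos.1 hpos)).mono (filter_subset _ _)
  have hcard : (#(freshSegments G Q a W k) : ℝ) ≤ Fintype.card V ^ (k + 2) := by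
    exact_mod_cast card_freshSegments_le G Q a W k
  obtain ⟨p, hp, hsum⟩ := exists_mul_sum_le_sum_filter hne
    (fun p i => Hits G Q a p.2.1 p.1 (p.2.1 ::ₘ entries p.2.2) (x i) (U i)) hw
    (ρ := (c / 2) ^ (k + 2)) fun i => by
      refine le_trans ?_ (hcount (x i) (hU i))
      rw [mul_pow]
      gcongr
  obtain ⟨hfresh, hwalk⟩ := (mem_filter.1 hp).2
  exact ⟨p.1, p.2.1, p.2.1 ::ₘ entries p.2.2, hfresh, hwalk, hsum⟩

lemma sum_mul_ite_half (w : ι → ℝ) (p : ι → Prop) :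
    ∑ i, w i * (if p i then 1 / 2 else 1) = ∑ i, w i - (∑ i with p i, w i) / 2 := by
  rw [sum_filter, sum_div, ← sum_sub_distrib]
  refine sum_congr rfl fun i _ => ?_
  split_ifs <;> ring

-- The segments are chosen greedily: every requirement `q` starts with weight `w q`, which is halved
-- whenever a segment hits it, and each new segment is chosen so that the total weight drops by a
-- constant factor.
lemma exists_absorber_sequence (hc : 0 < c) (hc' : c ≤ 1) (hn : 0 < Fintype.card V)
    (hU : ∀ q, c * (Fintype.card V : ℝ) ≤ #(U q)) {N : ℕ} {Q : ℕ → List Bool}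
    (hQ : ∀ i < N, (Q i).length = k + 2)
    (habs : ∀ i < N, ∀ a b x y, Absorbs G c (Q i) a b x y) (e₀ : V) {W : Finset V}
    (hW : #W + N * (k + 2) ≤ c / 2 * (Fintype.card V : ℝ)) {w : ι → ℝ} (hw : ∀ q, 0 ≤ w q) :
    ∃ (e y : ℕ → V) (M : ℕ → Multiset V), e 0 = e₀ ∧
      (∀ i < N, PatternWalk G (Q i) (e i) (e (i + 1)) (y i ::ₘ M i)) ∧
      Fresh W (∑ i ∈ range N, (y i ::ₘ M i)) ∧
      ∑ q, w q * ∏ i ∈ range N, (if Hits G (Q i) (e i) (e (i + 1)) (y i) (M i) (x q) (U q)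
        then (1 / 2 : ℝ) else 1) ≤ (1 - (c / 2) ^ (k + 2) / 2) ^ N * ∑ q, w q := by
  induction N generalizing Q e₀ W w with
  | zero => exact ⟨fun _ => e₀, fun _ => e₀, fun _ => 0, rfl, by simp, by simp [Fresh], by simp⟩
  | succ N ih =>
    rw [Nat.cast_succ] at hW
    have hQ₀ := hQ 0 N.succ_pos
    obtain ⟨y, b, M, hfresh, hwalk, hsum⟩ := exists_absorber (x := x) hc hc' hn hQ₀
      (habs 0 N.succ_pos e₀) hU hw (W := W) (by linarith [mul_nonneg N.cast_nonneg (by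
        positivity : (0 : ℝ) ≤ k + 2)])
    set w' : ι → ℝ := fun q => w q * if Hits G (Q 0) e₀ b y M (x q) (U q) then 1 / 2 else 1
    have hcard : (#(W ∪ (y ::ₘ M).toFinset) : ℝ) ≤ #W + (k + 2) := by
      have hM := (y ::ₘ M).toFinset_card_le
      rw [hwalk.card_eq, hQ₀] at hM
      exact_mod_cast (card_union_le _ _).trans (Nat.add_le_add_left hM _)
    obtain ⟨e', y', M', he', hwalk', hfresh', hsum'⟩ := ih (Q := fun i => Q (i + 1))
      (fun i hi => hQ _ (Nat.succ_lt_succ hi)) (fun i hi => habs _ (Nat.succ_lt_succ hi)) b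
      (W := W ∪ (y ::ₘ M).toFinset) (by linarith) (w := w')
      (fun q => mul_nonneg (hw q) (by split_ifs <;> norm_num))
    have hdrop : ∑ q, w' q ≤ (1 - (c / 2) ^ (k + 2) / 2) * ∑ q, w q := by
      rw [sum_mul_ite_half]
      linarith
    have hrate : (c / 2) ^ (k + 2) ≤ 1 := pow_le_one₀ (by positivity) (by linarith)
    refine ⟨fun i => Nat.casesOn i e₀ e', fun i => Nat.casesOn i y y',
      fun i => Nat.casesOn i M M', rfl, fun i hi => ?_, ?_, ?_⟩
    · cases i with
      | zero => simpa [he'] using hwalk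
      | succ i => exact hwalk' i (Nat.lt_of_succ_lt_succ hi)
    · rw [sum_range_succ', add_comm]
      exact hfresh.add hfresh'
    · simp only [prod_range_succ', he', mul_comm (∏ _ ∈ _, _), ← mul_assoc]
      rw [pow_succ, mul_assoc]
      exact hsum'.trans (mul_le_mul_of_nonneg_left hdrop (pow_nonneg (by linarith) _))

theorem exists_absorbers (hc : 0 < c) (hc' : c ≤ 1) (hn : 0 < Fintype.card V)
    (hU : ∀ q, c * (Fintype.card V : ℝ) ≤ #(U q)) {N h : ℕ} {Q : ℕ → List Bool}
    (hQ : ∀ i < N, (Q i).length = k + 2)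
    (habs : ∀ i < N, ∀ a b x y, Absorbs G c (Q i) a b x y) (e₀ : V)
    (hN : 1 + N * (k + 2) ≤ c / 2 * (Fintype.card V : ℝ))
    (hh : Fintype.card ι * (1 - (c / 2) ^ (k + 2) / 2) ^ N ≤ (1 / 2) ^ h) :
    ∃ (e y : ℕ → V) (M : ℕ → Multiset V), e 0 = e₀ ∧
      (∀ i < N, PatternWalk G (Q i) (e i) (e (i + 1)) (y i ::ₘ M i)) ∧
      Fresh {e₀} (∑ i ∈ range N, (y i ::ₘ M i)) ∧
      ∀ q, h ≤ #{i ∈ range N | Hits G (Q i) (e i) (e (i + 1)) (y i) (M i) (x q) (U q)} := by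
  obtain ⟨e, y, M, he, hwalk, hfresh, hsum⟩ := exists_absorber_sequence (x := x) hc hc' hn hU hQ
    habs e₀ (W := {e₀}) (by simpa using hN) (w := fun _ => 1) fun _ => zero_le_one
  refine ⟨e, y, M, he, hwalk, hfresh, fun q => ?_⟩
  simp only [one_mul, prod_ite, prod_const, one_pow, mul_one, sum_const, card_univ,
    nsmul_eq_mul] at hsum
  rw [← pow_le_pow_iff_right_of_lt_one₀ (one_half_pos (α := ℝ)) one_half_lt_one]
  exact (single_le_sum (f := fun q => (1 / 2 : ℝ) ^
    #{i ∈ range N | Hits G (Q i) (e i) (e (i + 1)) (y i) (M i) (x q) (U q)})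
    (fun q _ => by positivity) (mem_univ q)).trans (hsum.trans (by rwa [mul_comm]))

end Selection

section Filling

/-! ### Closing up a Hamilton cycle with absorbers -/

lemma sum_singleton_update {V : Type*} {Y : ℕ → V} {N i : ℕ} (hi : i < N) (x : V) :
    ∑ j ∈ range N, ({Function.update Y i x j} : Multiset V) + {Y i} =
      ∑ j ∈ range N, {Y j} + {x} := by
  have hi' := mem_range.2 hi
  rw [← sum_erase_add _ _ hi', ← sum_erase_add _ (fun j => ({Y j} : Multiset V)) hi',
    Function.update_self, add_right_comm]
  congr 2
  exact sum_congr rfl fun j hj => by rw [Function.update_of_ne (ne_of_mem_erase hj)]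

variable {V : Type*} [Fintype V] {G : V → V → Prop} {ν : ℝ} {N h k : ℕ} {Y : ℕ → V} {p : V}

/-- A walk made of `N` consecutive segments, the `i`-th one visiting `y i` and `M i`. Whenever a
walk to `p` has `ν n` possible choices for its next vertex, at least `h` of the segments can release
one of them and use an arbitrary vertex `x` instead. -/
structure Absorbers {V : Type*} [Fintype V] (G : V → V → Prop) (ν : ℝ) (N h : ℕ) where
  /-- The direction patterns of the segments. -/
  Q : ℕ → List Bool
  /-- The endpoints of the segments. -/
  e : ℕ → V
  /-- The switchable vertices. -/
  y : ℕ → V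
  /-- The remaining vertices of the segments. -/
  M : ℕ → Multiset V
  walk : ∀ i < N, PatternWalk G (Q i) (e i) (e (i + 1)) (y i ::ₘ M i)
  hits : ∀ (x z p : V) (s : Bool) (τ : List Bool), z ∈ robustNbhd G ν s (robustReach G ν p τ) →
    h ≤ #{i ∈ range N |
      Hits G (Q i) (e i) (e (i + 1)) (y i) (M i) x (nbhd G s z ∩ robustReach G ν p τ)}

namespace Absorbers

/-- The vertices of all segments. -/
def vertices (A : Absorbers G ν N h) : Multiset V :=
  {A.e 0} + ∑ i ∈ range N, (A.y i ::ₘ A.M i)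

/-- `Y` is a valid choice of the switchable vertices, differing from the original one on at most
`k` segments. -/
def IsSwitching (A : Absorbers G ν N h) (k : ℕ) (Y : ℕ → V) : Prop :=
  (∀ i < N, PatternWalk G (A.Q i) (A.e i) (A.e (i + 1)) (Y i ::ₘ A.M i)) ∧
    ∃ I : Finset ℕ, #I ≤ k ∧ ∀ i ∉ I, Y i = A.y i

lemma IsSwitching.update {A : Absorbers G ν N h} (hY : A.IsSwitching k Y) {i : ℕ} {x : V}
    (hx : PatternWalk G (A.Q i) (A.e i) (A.e (i + 1)) (x ::ₘ A.M i)) :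
    A.IsSwitching (k + 1) (Function.update Y i x) := by
  obtain ⟨hwalk, I, hI, hYI⟩ := hY
  refine ⟨fun j hj => ?_, insert i I, (card_insert_le _ _).trans (Nat.succ_le_succ hI),
    fun j hj => ?_⟩
  · rcases eq_or_ne j i with rfl | hji
    · rwa [Function.update_self]
    · rw [Function.update_of_ne hji]
      exact hwalk j hj
  · rw [mem_insert, not_or] at hj
    rw [Function.update_of_ne hj.1, hYI j hj.2]

lemma IsSwitching.exists_hits {A : Absorbers G ν N h} (hY : A.IsSwitching k Y) (hk : k < h)
    (x : V) {z : V} {s : Bool} {τ : List Bool}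
    (hz : z ∈ robustNbhd G ν s (robustReach G ν p τ)) :
    ∃ i < N, Y i = A.y i ∧ Hits G (A.Q i) (A.e i) (A.e (i + 1)) (A.y i) (A.M i) x
      (nbhd G s z ∩ robustReach G ν p τ) := by
  obtain ⟨-, I, hI, hYI⟩ := hY
  obtain ⟨i, hi, hiI⟩ :=
    exists_mem_notMem_of_card_lt_card (hI.trans_lt (hk.trans_le (A.hits x z p s τ hz)))
  rw [mem_filter, mem_range] at hi
  exact ⟨i, hi.1, hYI i hiI, hi.2⟩

-- The next vertex of the walk is released by a segment, which in exchange takes up a vertex of `X`.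
lemma exists_walk_of_mem_robustReach (A : Absorbers G ν N h) {s : Bool} {σ : List Bool} {z : V}
    (hz : z ∈ robustReach G ν p (s :: σ)) {X : Multiset V} (hX : X.card = σ.length)
    (hY : A.IsSwitching k Y) (hk : k + σ.length ≤ h) :
    ∃ Y' M, A.IsSwitching (k + σ.length) Y' ∧ PatternWalk G (s :: σ) z p (p ::ₘ M) ∧
      ∑ j ∈ range N, {Y' j} + M = ∑ j ∈ range N, {Y j} + X := by
  induction σ generalizing s z X k Y with
  | nil =>
    obtain rfl : X = 0 := Multiset.card_eq_zero.1 hX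
    exact ⟨Y, 0, hY, .single (mem_nbhd.1 (mem_nbhd_not.1 hz)), rfl⟩
  | cons s' σ ih =>
    rw [List.length_cons] at hX hk ⊢
    obtain ⟨x, hx⟩ := Multiset.card_pos_iff_exists_mem.1 (by omega : 0 < X.card)
    obtain ⟨X, rfl⟩ := Multiset.exists_cons_of_mem hx
    rw [Multiset.card_cons, Nat.succ_inj] at hX
    obtain ⟨i, hi, hYi, hU, hwalk⟩ := hY.exists_hits (by omega) x hz
    rw [mem_inter] at hU
    obtain ⟨Y', M, hY', hM, hsum⟩ := ih hU.2 hX (hY.update hwalk) (by omega)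
    refine ⟨Y', A.y i ::ₘ M, by rwa [add_comm σ.length, ← add_assoc], ?_, ?_⟩
    · rw [Multiset.cons_swap]
      exact .cons (mem_nbhd.1 hU.1) hM
    · have hupdate := sum_singleton_update (Y := Y) hi x
      rw [← Multiset.singleton_add, ← Multiset.singleton_add, add_left_comm, hsum, ← hYi,
        ← add_assoc, add_comm {Y i}, hupdate, add_assoc]

lemma exists_walk (A : Absorbers G ν N h) (hG : IsExpander G ν) (z p : V) {σ : List Bool}
    (hσ : 1 ≤ σ.length * ν) {X : Multiset V} (hX : X.card = σ.length - 1)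
    (hY : A.IsSwitching k Y) (hk : k + X.card ≤ h) :
    ∃ Y' M, A.IsSwitching (k + X.card) Y' ∧ PatternWalk G σ z p (p ::ₘ M) ∧
      ∑ j ∈ range N, {Y' j} + M = ∑ j ∈ range N, {Y j} + X := by
  have hz : z ∈ robustReach G ν p σ := hG.robustReach_eq_univ p hσ ▸ mem_univ z
  rw [hX] at hk ⊢
  cases σ with
  | nil => norm_num at hσ
  | cons s σ => exact A.exists_walk_of_mem_robustReach hz hX hY hk

end Absorbers

/-- A connecting pattern followed by a given walk. -/
structure Block {V : Type*} (G : V → V → Prop) where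
  /-- The connecting pattern. -/
  C : List Bool
  /-- The pattern of the walk. -/
  β : List Bool
  /-- The start of the walk. -/
  p : V
  /-- The end of the walk. -/
  q : V
  /-- The vertices of the walk other than its start. -/
  M : Multiset V
  walk : PatternWalk G β p q M

namespace Absorbers

lemma exists_add_of_card_eq {α : Type*} {X : Multiset α} {a b : ℕ} (hX : X.card = a + b) :
    ∃ X₁ X₂, X = X₁ + X₂ ∧ X₁.card = a ∧ X₂.card = b := by
  induction X using Quotient.inductionOn with
  | h L =>
    obtain ⟨A, B, rfl, hA, hB⟩ := exists_append_of_length hX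
    exact ⟨A, B, (Multiset.coe_add A B).symm, hA, hB⟩

lemma exists_walk_through_blocks (A : Absorbers G ν N h) (hG : IsExpander G ν) (t : V)
    {F : List Bool} (hF : 1 ≤ F.length * ν) {L : List (Block G)}
    (hL : ∀ B ∈ L, 1 ≤ B.C.length * ν) (z : V) {X : Multiset V}
    (hX : X.card = (L.map fun B => B.C.length - 1).sum + (F.length - 1))
    (hY : A.IsSwitching k Y) (hk : k + X.card ≤ h) :
    ∃ Y' M, A.IsSwitching (k + X.card) Y' ∧
      PatternWalk G (L.flatMap (fun B => B.C ++ B.β) ++ F) z t (t ::ₘ M) ∧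
      ∑ j ∈ range N, {Y' j} + M =
        ∑ j ∈ range N, {Y j} + X + (L.map fun B => B.p ::ₘ B.M).sum := by
  induction L generalizing z X k Y with
  | nil =>
    rw [List.map_nil, List.sum_nil, zero_add] at hX
    simpa using A.exists_walk hG z t hF hX hY hk
  | cons B L ih =>
    rw [List.forall_mem_cons] at hL
    rw [List.map_cons, List.sum_cons, add_assoc] at hX
    obtain ⟨X₁, X₂, rfl, hX₁, hX₂⟩ := exists_add_of_card_eq hX
    rw [Multiset.card_add, ← add_assoc] at hk ⊢
    obtain ⟨Y₁, M₁, hY₁, hM₁, hsum₁⟩ := A.exists_walk hG z B.p hL.1 hX₁ hY (by omega)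
    obtain ⟨Y₂, M₂, hY₂, hM₂, hsum₂⟩ := ih hL.2 B.q hX₂ hY₁ hk
    refine ⟨Y₂, B.p ::ₘ M₁ + (B.M + M₂), hY₂, ?_, ?_⟩
    · refine (hM₁.append (B.walk.append hM₂)).congr (by simp) ?_
      simp only [← Multiset.singleton_add]
      abel
    · calc ∑ j ∈ range N, {Y₂ j} + (B.p ::ₘ M₁ + (B.M + M₂))
          = (∑ j ∈ range N, {Y₂ j} + M₂) + (B.p ::ₘ B.M) + M₁ := by
            simp only [← Multiset.singleton_add]
            abel
        _ = (∑ j ∈ range N, {Y₁ j} + M₁) + X₂ + (L.map fun B => B.p ::ₘ B.M).sum +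
              (B.p ::ₘ B.M) := by
            rw [hsum₂]
            abel
        _ = _ := by
            rw [hsum₁, List.map_cons, List.sum_cons]
            abel

lemma IsSwitching.walk_flatMap {A : Absorbers G ν N h} (hY : A.IsSwitching k Y) {m : ℕ}
    (hm : m ≤ N) : PatternWalk G ((List.range m).flatMap A.Q) (A.e 0) (A.e m)
      (∑ i ∈ range m, (Y i ::ₘ A.M i)) := by
  induction m with
  | zero => exact .nil _
  | succ m ih =>
    rw [List.range_succ, List.flatMap_append, sum_range_succ]
    exact (ih (Nat.le_of_succ_le hm)).append (by simpa using hY.1 m hm)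

theorem closedWalk (A : Absorbers G ν N h) (hG : IsExpander G ν) {F : List Bool}
    (hF : 1 ≤ F.length * ν) {L : List (Block G)} (hL : ∀ B ∈ L, 1 ≤ B.C.length * ν)
    {X : Multiset V} (hX : X.card = (L.map fun B => B.C.length - 1).sum + (F.length - 1))
    (hXh : X.card ≤ h) :
    PatternWalk G ((List.range N).flatMap A.Q ++ (L.flatMap (fun B => B.C ++ B.β) ++ F))
      (A.e 0) (A.e 0) (A.vertices + X + (L.map fun B => B.p ::ₘ B.M).sum) := by
  have hA : A.IsSwitching 0 A.y := ⟨A.walk, ∅, by simp, fun _ _ => rfl⟩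
  obtain ⟨Y, M, hY, hwalk, hsum⟩ :=
    A.exists_walk_through_blocks hG (A.e 0) hF hL (A.e N) hX hA (by rwa [zero_add])
  refine ((hY.walk_flatMap le_rfl).append hwalk).congr rfl ?_
  simp only [vertices, ← Multiset.singleton_add, sum_add_distrib]
  calc ∑ i ∈ range N, {Y i} + ∑ i ∈ range N, A.M i + ({A.e 0} + M)
      = ∑ i ∈ range N, {Y i} + M + (∑ i ∈ range N, A.M i + {A.e 0}) := by abel
    _ = _ := by
        rw [hsum]
        simp only [← Multiset.singleton_add]
        abel

end Absorbers

end Filling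

section Permutations

/-! ### Disjoint perfect matchings -/

variable {V : Type*} [Fintype V] {G : V → V → Prop} {ν : ℝ} {r : ℕ} {B B' : V → Finset V}

lemma IsExpander.card_le_card_nbhd_sdiff (hG : IsExpander G ν) (hr : r < ν * Fintype.card V)
    {v : V} (hB : #(B v) ≤ r) {S : Finset V} (hS : #S < 3 / 8 * (Fintype.card V : ℝ)) :
    #S ≤ #(nbhd G true v \ B v) := by
  have hdeg := hG.degree true v
  have hsdiff := le_card_sdiff (B v) (nbhd G true v)
  have hle : #(nbhd G true v) ≤ #(nbhd G true v \ B v) + r := by omega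
  rify at hle ⊢
  nlinarith [hG.pos]

lemma robustNbhd_subset_biUnion_sdiff (hr : r < ν * Fintype.card V)
    (hB' : ∀ w, #(B' w) ≤ r) (hBB' : ∀ v w, w ∈ B v → v ∈ B' w) (S : Finset V) :
    robustNbhd G ν false S ⊆ S.biUnion fun v => nbhd G true v \ B v := by
  intro w hw
  rw [mem_robustNbhd] at hw
  have hlt : #(B' w) < #(nbhd G false w ∩ S) :=
    (hB' w).trans_lt (by exact_mod_cast hr.trans_le hw)
  obtain ⟨u, hu, huB⟩ := exists_mem_notMem_of_card_lt_card hlt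
  rw [mem_inter] at hu
  exact mem_biUnion.2 ⟨u, hu.2, mem_sdiff.2 ⟨mem_nbhd_not.1 hu.1, mt (hBB' u w) huB⟩⟩

lemma IsExpander.exists_perm (hG : IsExpander G ν) (hr : r < ν * Fintype.card V)
    (hB : ∀ v, #(B v) ≤ r) (hB' : ∀ w, #(B' w) ≤ r) (hBB' : ∀ v w, w ∈ B v → v ∈ B' w) :
    ∃ π : Equiv.Perm V, ∀ v, G v (π v) ∧ π v ∉ B v := by
  have hall (S : Finset V) : #S ≤ #(S.biUnion fun v => nbhd G true v \ B v) := by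
    rcases S.eq_empty_or_nonempty with rfl | ⟨v, hv⟩
    · simp
    rcases le_or_gt (3 / 8 * (Fintype.card V : ℝ)) #S with hS | hS
    · refine le_trans ?_ (card_le_card (robustNbhd_subset_biUnion_sdiff hr hB' hBB' S))
      have hn : 0 < ν * Fintype.card V := (Nat.cast_nonneg r).trans_lt hr
      have hmin : (#S : ℝ) ≤ min (Fintype.card V : ℝ) (#S + ν * Fintype.card V) :=
        le_min (Nat.cast_le.2 (card_le_univ S)) (by linarith)
      exact_mod_cast hmin.trans (hG.expand false S hS)
    · exact (hG.card_le_card_nbhd_sdiff hr (hB v) hS).trans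
        (card_le_card (subset_biUnion_of_mem (fun v => nbhd G true v \ B v) hv))
  obtain ⟨f, hf, hfB⟩ := (all_card_le_biUnion_card_iff_exists_injective _).1 hall
  refine ⟨Equiv.ofBijective f (Finite.injective_iff_bijective.1 hf), fun v => ?_⟩
  obtain ⟨hadj, hvB⟩ := mem_sdiff.1 (hfB v)
  exact ⟨mem_nbhd.1 hadj, hvB⟩

lemma IsExpander.exists_perms (hG : IsExpander G ν) (r : ℕ) (hr : r ≤ ν * Fintype.card V) :
    ∃ π : Fin r → Equiv.Perm V, (∀ j v, G v (π j v)) ∧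
      ∀ v, Function.Injective fun j => π j v := by
  induction r with
  | zero => exact ⟨fun j => j.elim0, fun j => j.elim0, fun _ j => j.elim0⟩
  | succ r ih =>
    have hr' : r < ν * Fintype.card V :=
      (Nat.cast_lt.2 r.lt_succ_self).trans_le hr
    obtain ⟨π, hπ, hinj⟩ := ih hr'.le
    have hB (v : V) : #(univ.image fun j => π j v) ≤ r := card_image_le.trans (by simp)
    have hB' (w : V) : #(univ.image fun j => (π j).symm w) ≤ r := card_image_le.trans (by simp)
    have hBB' (v w : V) (hw : w ∈ univ.image fun j => π j v) :
        v ∈ univ.image fun j => (π j).symm w := by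
      obtain ⟨j, -, rfl⟩ := mem_image.1 hw
      exact mem_image.2 ⟨j, mem_univ _, Equiv.symm_apply_apply _ _⟩
    obtain ⟨σ, hσ⟩ := hG.exists_perm hr' hB hB' hBB'
    refine ⟨Fin.cons σ π, Fin.cases (fun v => (hσ v).1) hπ, fun v => ?_⟩
    have hcons : (fun j => (Fin.cons σ π : Fin (r + 1) → Equiv.Perm V) j v)
        = Fin.cons (σ v) fun j => π j v := funext (Fin.cases rfl fun _ => rfl)
    rw [hcons, Fin.cons_injective_iff]
    exact ⟨fun ⟨j, hj⟩ => (hσ v).2 (mem_image.2 ⟨j, mem_univ _, hj⟩), hinj v⟩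

end Permutations

section Labelling

/-! ### Balanced labellings -/

lemma exp_sub_two_mul_sq_le {x : ℝ} (hx : |x| ≤ 1 / 2) :
    Real.exp (x - 2 * x ^ 2) ≤ 1 + x := by
  obtain ⟨hx, hx'⟩ := abs_le.1 hx
  have hpos : 0 < 1 + x := by linarith
  rw [← Real.le_log_iff_exp_le hpos]
  refine le_trans ?_ (Real.one_sub_inv_le_log_of_pos hpos)
  have hsub : 1 - (1 + x)⁻¹ - (x - 2 * x ^ 2) = x ^ 2 * (1 + 2 * x) / (1 + x) := by
    field_simp
    ring
  have hnonneg : 0 ≤ x ^ 2 * (1 + 2 * x) / (1 + x) :=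
    div_nonneg (mul_nonneg (sq_nonneg x) (by linarith)) hpos.le
  linarith

variable {V Λ : Type*} [Fintype Λ] [DecidableEq Λ]

/-- The indicator of `a = l`, minus its mean when `a` is uniformly random. -/
noncomputable def deviation (l a : Λ) : ℝ :=
  (if a = l then 1 else 0) - 1 / Fintype.card Λ

lemma sum_deviation_eq (f : V → Λ) (l : Λ) (D : Finset V) :
    ∑ v ∈ D, deviation l (f v) = (#{v ∈ D | f v = l} : ℝ) - #D / Fintype.card Λ := by
  simp only [deviation, sum_sub_distrib, sum_boole, sum_const, nsmul_eq_mul, mul_one_div]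

lemma abs_deviation_le_one (l a : Λ) : |deviation l a| ≤ 1 := by
  have : Nonempty Λ := ⟨l⟩
  have hcard : (1 : ℝ) ≤ Fintype.card Λ := Nat.one_le_cast.2 Fintype.card_pos
  have hle : 1 / (Fintype.card Λ : ℝ) ≤ 1 := div_le_one_of_le₀ hcard (by linarith)
  have hpos : 0 < 1 / (Fintype.card Λ : ℝ) := by positivity
  rw [deviation, abs_le]
  split_ifs <;> constructor <;> linarith

-- The factors are independent under a uniformly random `f`, with mean `1`.
lemma sum_prod_one_add_deviation [Fintype V] [Nonempty Λ] (t : ℝ) (l : Λ) (D : Finset V) :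
    ∑ f : V → Λ, ∏ v ∈ D, (1 + t * deviation l (f v)) =
      (Fintype.card Λ : ℝ) ^ Fintype.card V := by
  have hsum (v : V) : ∑ a : Λ, (if v ∈ D then 1 + t * deviation l a else 1) = Fintype.card Λ := by
    split_ifs
    · rw [sum_add_distrib, ← mul_sum]
      simp [deviation]
    · simp
  calc ∑ f : V → Λ, ∏ v ∈ D, (1 + t * deviation l (f v))
      = ∑ f : V → Λ, ∏ v, (if v ∈ D then 1 + t * deviation l (f v) else 1) := by
        simp only [prod_ite_mem, univ_inter]
    _ = ∏ v, ∑ a : Λ, (if v ∈ D then 1 + t * deviation l a else 1) := by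
        rw [prod_univ_sum, Fintype.piFinset_univ]
    _ = (Fintype.card Λ : ℝ) ^ Fintype.card V := by
        rw [prod_congr rfl fun v _ => hsum v, prod_const, card_univ]

lemma exp_le_prod_one_add_deviation (f : V → Λ) (l : Λ) (D : Finset V) {t : ℝ}
    (ht : |t| ≤ 1 / 2) :
    Real.exp (t * ((#{v ∈ D | f v = l} : ℝ) - #D / Fintype.card Λ) - 2 * t ^ 2 * #D) ≤
      ∏ v ∈ D, (1 + t * deviation l (f v)) := by
  have habs (v : V) : |t * deviation l (f v)| ≤ |t| := by
    rw [abs_mul]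
    exact mul_le_of_le_one_right (abs_nonneg _) (abs_deviation_le_one _ _)
  calc Real.exp (t * ((#{v ∈ D | f v = l} : ℝ) - #D / Fintype.card Λ) - 2 * t ^ 2 * #D)
      = ∏ v ∈ D, Real.exp (t * deviation l (f v) - 2 * t ^ 2) := by
        rw [← Real.exp_sum, sum_sub_distrib, ← mul_sum, sum_deviation_eq, sum_const, nsmul_eq_mul,
          mul_comm (#D : ℝ)]
    _ ≤ ∏ v ∈ D, (1 + t * deviation l (f v)) := by
        refine prod_le_prod (fun v _ => (Real.exp_pos _).le) fun v _ => ?_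
        refine le_trans (Real.exp_le_exp.2 ?_) (exp_sub_two_mul_sq_le ((habs v).trans ht))
        linarith [sq_le_sq.2 (habs v)]

lemma exists_prod_one_add_deviation_le [Finite V] [Nonempty Λ] {κ : Type*} [Fintype κ]
    (D : κ → Finset V) (l : κ → Λ) {t : κ → ℝ} (ht : ∀ q, |t q| ≤ 1 / 2) :
    ∃ f : V → Λ, ∀ q, ∏ v ∈ D q, (1 + t q * deviation (l q) (f v)) ≤ Fintype.card κ := by
  have := Fintype.ofFinite V
  have hsum : ∑ f : V → Λ, ∑ q, ∏ v ∈ D q, (1 + t q * deviation (l q) (f v)) =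
      ∑ _f : V → Λ, (Fintype.card κ : ℝ) := by
    rw [sum_comm]
    simp only [sum_prod_one_add_deviation, sum_const, card_univ, nsmul_eq_mul, Fintype.card_fun,
      Nat.cast_pow, mul_comm]
  obtain ⟨f, -, hf⟩ := exists_le_of_sum_le univ_nonempty hsum.le
  refine ⟨f, fun q => le_trans ?_ hf⟩
  exact single_le_sum (f := fun q => ∏ v ∈ D q, (1 + t q * deviation (l q) (f v)))
    (fun q _ => (Real.exp_pos _).le.trans (exp_le_prod_one_add_deviation f (l q) (D q) (ht q)))
    (mem_univ q)

lemma mul_card_sub_le_of_prod_lt {f : V → Λ} {l : Λ} {D : Finset V} {t ε : ℝ} (ht : |t| ≤ 1 / 2)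
    (htε : t ^ 2 = (ε / (4 * Fintype.card Λ)) ^ 2)
    (hlt : ∏ v ∈ D, (1 + t * deviation l (f v)) <
      Real.exp (#D * (ε ^ 2 / (8 * (Fintype.card Λ : ℝ) ^ 2)))) :
    t * ((#{v ∈ D | f v = l} : ℝ) - #D / Fintype.card Λ) ≤
      ε / (4 * Fintype.card Λ) * (ε * (#D / Fintype.card Λ)) := by
  have hexp := Real.exp_lt_exp.1 ((exp_le_prod_one_add_deviation f l D ht).trans_lt hlt)
  have hsplit : ε / (4 * Fintype.card Λ) * (ε * (#D / Fintype.card Λ)) =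
      #D * (ε ^ 2 / (8 * (Fintype.card Λ : ℝ) ^ 2)) +
        2 * (ε / (4 * Fintype.card Λ)) ^ 2 * #D := by
    ring
  rw [hsplit, ← htε]
  linarith

lemma exists_labelling [Finite V] [Nonempty Λ] {ι : Type*} [Fintype ι] (D : ι → Finset V) {ε μ : ℝ}
    (hε : 0 < ε) (hε' : ε ≤ 1) (hD : ∀ i, μ ≤ #(D i))
    (hμ : 2 * (Fintype.card ι : ℝ) * Fintype.card Λ <
      Real.exp (μ * (ε ^ 2 / (8 * (Fintype.card Λ : ℝ) ^ 2)))) :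
    ∃ f : V → Λ, ∀ i l,
      (1 - ε) * (#(D i) / Fintype.card Λ) ≤ #{v ∈ D i | f v = l} ∧
      #{v ∈ D i | f v = l} ≤ (1 + ε) * (#(D i) / Fintype.card Λ) := by
  set t : ℝ := ε / (4 * Fintype.card Λ) with ht
  have hcard : (1 : ℝ) ≤ Fintype.card Λ := Nat.one_le_cast.2 Fintype.card_pos
  have htpos : 0 < t := by positivity
  have hthalf : t ≤ 1 / 2 := by
    rw [ht, div_le_iff₀ (by positivity)]
    linarith
  obtain ⟨f, hf⟩ := exists_prod_one_add_deviation_le (fun q : ι × Λ × Bool => D q.1)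
    (fun q => q.2.1) (t := fun q => cond q.2.2 t (-t)) fun q => by
      cases q.2.2 <;> simp only [cond_true, cond_false, abs_neg, abs_of_pos htpos, hthalf]
  have hlt (i : ι) (l : Λ) (s : Bool) :
      ∏ v ∈ D i, (1 + cond s t (-t) * deviation l (f v)) <
        Real.exp (#(D i) * (ε ^ 2 / (8 * (Fintype.card Λ : ℝ) ^ 2))) := by
    refine ((hf (i, l, s)).trans_lt ?_).trans_le (Real.exp_le_exp.2
      (mul_le_mul_of_nonneg_right (hD i) (by positivity)))
    refine (le_of_eq ?_).trans_lt hμ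
    simp only [Fintype.card_prod, Fintype.card_bool, Nat.cast_mul, Nat.cast_ofNat]
    ring
  refine ⟨f, fun i l => ?_⟩
  have hupper := mul_card_sub_le_of_prod_lt ((abs_of_pos htpos).trans_le hthalf) rfl (hlt i l true)
  have hlower := mul_card_sub_le_of_prod_lt
    (by rwa [abs_neg, abs_of_pos htpos]) (neg_sq t) (hlt i l false)
  rw [mul_le_mul_iff_right₀ htpos] at hupper
  rw [neg_mul_comm, mul_le_mul_iff_right₀ htpos] at hlower
  constructor <;> linarith

end Labelling

section Linking

/-! ### Nearly perfect covers by short walks -/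

lemma exists_injOn_of_card_le_biUnion {ι α : Type*} [DecidableEq α] [Nonempty α] {X : Finset ι}
    {t : ι → Finset α} (h : ∀ S ⊆ X, #S ≤ #(S.biUnion t)) :
    ∃ f : ι → α, Set.InjOn f X ∧ ∀ v ∈ X, f v ∈ t v := by
  have hall (S : Finset X) : #S ≤ #(S.biUnion fun v => t v) := by
    rw [← card_map (Function.Embedding.subtype _)]
    refine (h _ fun v hv => ?_).trans (card_le_card fun a ha => ?_)
    · obtain ⟨w, -, rfl⟩ := mem_map.1 hv
      exact w.2
    · obtain ⟨v, hv, hav⟩ := mem_biUnion.1 ha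
      obtain ⟨w, hw, rfl⟩ := mem_map.1 hv
      exact mem_biUnion.2 ⟨w, hw, hav⟩
  obtain ⟨f, hf, hft⟩ := (all_card_le_biUnion_card_iff_exists_injective _).1 hall
  have hext (v : X) : Function.extend Subtype.val f (fun _ => Classical.arbitrary α) v = f v :=
    Subtype.val_injective.extend_apply _ _ _
  refine ⟨Function.extend Subtype.val f fun _ => Classical.arbitrary α,
    fun v hv w hw hvw => ?_, fun v hv => ?_⟩
  · rw [hext ⟨v, hv⟩, hext ⟨w, hw⟩] at hvw
    exact congrArg Subtype.val (hf hvw)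
  · rw [hext ⟨v, hv⟩]
    exact hft _

-- Hall's theorem with deficiency `d`, obtained by adding `d` elements that everything may use.
lemma exists_injOn_of_card_le_biUnion_add {ι α : Type*} [DecidableEq α] [Nonempty α] {d : ℕ}
    {X : Finset ι} {t : ι → Finset α} (h : ∀ S ⊆ X, #S ≤ #(S.biUnion t) + d) :
    ∃ X' ⊆ X, ∃ f : ι → α, #X ≤ #X' + d ∧ Set.InjOn f X' ∧ ∀ v ∈ X', f v ∈ t v := by
  obtain ⟨F, hF, hFt⟩ := exists_injOn_of_card_le_biUnion (X := X)
    (t := fun v => (t v).disjSum (univ : Finset (Fin d))) fun S hS => by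
      rcases S.eq_empty_or_nonempty with rfl | ⟨v₀, hv₀⟩
      · simp
      have hsub : (S.biUnion t).disjSum (univ : Finset (Fin d)) ⊆
          S.biUnion fun v => (t v).disjSum univ := by
        intro z hz
        rw [mem_biUnion]
        rcases mem_disjSum.1 hz with ⟨a, ha, rfl⟩ | ⟨i, -, rfl⟩
        · obtain ⟨v, hv, hav⟩ := mem_biUnion.1 ha
          exact ⟨v, hv, inl_mem_disjSum.2 hav⟩
        · exact ⟨v₀, hv₀, inr_mem_disjSum.2 (mem_univ _)⟩
      calc #S ≤ #(S.biUnion t) + d := h S hS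
        _ = #((S.biUnion t).disjSum (univ : Finset (Fin d))) := by rw [card_disjSum, card_fin]
        _ ≤ _ := card_le_card hsub
  have hright : #{v ∈ X | ¬ (F v).isLeft} ≤ d := by
    calc #{v ∈ X | ¬ (F v).isLeft}
        ≤ #((univ : Finset (Fin d)).map (Function.Embedding.inr (α := α))) := by
          refine card_le_card_of_injOn F (fun v hv => ?_) (hF.mono (filter_subset _ _))
          obtain ⟨i, hi⟩ := Sum.isRight_iff.1 (Sum.not_isLeft.1 (mem_filter.1 hv).2)
          exact mem_map.2 ⟨i, mem_univ _, hi.symm⟩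
      _ = d := by rw [card_map, card_fin]
  refine ⟨{v ∈ X | (F v).isLeft}, filter_subset _ _,
    fun v => (F v).elim id fun _ => Classical.arbitrary α, ?_, fun v hv w hw hvw => ?_,
    fun v hv => ?_⟩
  · rw [← card_filter_add_card_filter_not (s := X) fun v => (F v).isLeft]
    gcongr
  · obtain ⟨hvX, hv⟩ := mem_filter.1 hv
    obtain ⟨hwX, hw⟩ := mem_filter.1 hw
    obtain ⟨a, ha⟩ := Sum.isLeft_iff.1 hv
    obtain ⟨b, hb⟩ := Sum.isLeft_iff.1 hw
    simp only [ha, hb, Sum.elim_inl, id] at hvw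
    exact hF hvX hwX (by rw [ha, hb, hvw])
  · obtain ⟨hvX, hv⟩ := mem_filter.1 hv
    obtain ⟨a, ha⟩ := Sum.isLeft_iff.1 hv
    simpa only [ha, Sum.elim_inl, id, inl_mem_disjSum] using hFt v hvX

variable {V Λ : Type*} [Fintype V] {G : V → V → Prop} {d : ℕ}

/-- Hall's condition with deficiency `d` for matching `P` into `P'` along direction `s`. -/
def HallLink (G : V → V → Prop) (d : ℕ) (s : Bool) (P P' : Finset V) : Prop :=
  ∀ X ⊆ P, #X ≤ #(X.biUnion fun v => nbhd G s v ∩ P') + d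

lemma exists_walks_of_hallLink [Nonempty V] (P : Λ → Finset V)
    (h : ∀ s a b, HallLink G d s (P a) (P b)) (L : List (Bool × Λ)) (a : Λ) {X : Finset V}
    (hX : X ⊆ P a) :
    ∃ X' ⊆ X, #X ≤ #X' + L.length * d ∧ ∃ (q : V → V) (M : V → Multiset V),
      (∀ x ∈ X', PatternWalk G (L.map Prod.fst) x (q x) (M x)) ∧
      ∑ x ∈ X', M x ≤ (L.map fun l => (P l.2).val).sum := by
  induction L generalizing a X with
  | nil => exact ⟨X, subset_rfl, by simp, id, fun _ => 0, fun x _ => .nil x, by simp⟩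
  | cons l L ih =>
    obtain ⟨s, b⟩ := l
    obtain ⟨X₁, hX₁, g, hcard, hg, hgP⟩ :=
      exists_injOn_of_card_le_biUnion_add fun S hS => h s a b S (hS.trans hX)
    obtain ⟨Y, hY, hYcard, q, M, hwalk, hM⟩ := ih b (X := X₁.image g)
      (image_subset_iff.2 fun v hv => (mem_inter.1 (hgP v hv)).2)
    obtain ⟨X₂, hX₂, rfl⟩ := subset_image_iff.1 hY
    have hinj : Set.InjOn g X₂ := hg.mono (coe_subset.2 hX₂)
    refine ⟨X₂, hX₂.trans hX₁, ?_, fun v => q (g v), fun v => g v ::ₘ M (g v), fun v hv => ?_, ?_⟩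
    · rw [card_image_of_injOn hg, card_image_of_injOn hinj] at hYcard
      rw [List.length_cons, add_mul]
      omega
    · exact .cons (mem_nbhd.1 (mem_inter.1 (hgP v (hX₂ hv))).1) (hwalk _ (mem_image_of_mem g hv))
    · calc ∑ v ∈ X₂, (g v ::ₘ M (g v))
          = (X₂.image g).val + ∑ y ∈ X₂.image g, M y := by
            rw [← sum_image (f := fun y => y ::ₘ M y) hinj]
            simp only [← Multiset.singleton_add, sum_add_distrib, sum_multiset_singleton]
        _ ≤ (((s, b) :: L).map fun l => (P l.2).val).sum := by
            rw [List.map_cons, List.sum_cons]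
            refine add_le_add (val_le_iff.2 (image_subset_iff.2 fun v hv => ?_)) hM
            exact (mem_inter.1 (hgP v (hX₂ hv))).2

-- The matching is extracted from `r` permutations by double counting.
lemma hallLink_of_counts [DecidableEq Λ] {r : ℕ} {u w : ℝ} {s : Bool} {ρ : Fin r → Equiv.Perm V}
    (hρ : ∀ j v, DirAdj G s v (ρ j v)) {f : V → Λ} {a b : Λ}
    (hu : ∀ v, u ≤ #{j | f (ρ j v) = b}) (hw : ∀ y, #{j | f ((ρ j).symm y) = a} ≤ w)
    (hpos : 0 < u) (hd : #{v | f v = b} * (w - u) ≤ d * u) :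
    HallLink G d s {v | f v = a} {v | f v = b} := by
  intro X hX
  set Y := X.biUnion fun v => nbhd G s v ∩ ({y | f y = b} : Finset V)
  have hmap (j : Fin r) : #{v ∈ X | f (ρ j v) = b} ≤ #{y ∈ Y | f ((ρ j).symm y) = a} := by
    refine card_le_card_of_injOn (ρ j) (fun v hv => ?_) (ρ j).injective.injOn
    obtain ⟨hv, hvb⟩ := mem_filter.1 hv
    refine mem_filter.2 ⟨mem_biUnion.2 ⟨v, hv, mem_inter.2
      ⟨mem_nbhd.2 (hρ j v), mem_filter.2 ⟨mem_univ _, hvb⟩⟩⟩, ?_⟩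
    rw [Equiv.symm_apply_apply]
    exact (mem_filter.1 (hX hv)).2
  have hcount : ∑ v ∈ X, #{j | f (ρ j v) = b} ≤ ∑ y ∈ Y, #{j | f ((ρ j).symm y) = a} :=
    calc ∑ v ∈ X, #{j | f (ρ j v) = b}
        = ∑ j, #{v ∈ X | f (ρ j v) = b} :=
          sum_card_bipartiteAbove_eq_sum_card_bipartiteBelow fun v j => f (ρ j v) = b
      _ ≤ ∑ j, #{y ∈ Y | f ((ρ j).symm y) = a} := sum_le_sum fun j _ => hmap j
      _ = ∑ y ∈ Y, #{j | f ((ρ j).symm y) = a} :=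
          (sum_card_bipartiteAbove_eq_sum_card_bipartiteBelow fun y j => f ((ρ j).symm y) = a).symm
  have hXY : #X * u ≤ #Y * w :=
    calc (#X : ℝ) * u ≤ ∑ v ∈ X, (#{j | f (ρ j v) = b} : ℝ) := by
          rw [← nsmul_eq_mul]; exact card_nsmul_le_sum _ _ _ fun v _ => hu v
      _ ≤ ∑ y ∈ Y, (#{j | f ((ρ j).symm y) = a} : ℝ) := by exact_mod_cast hcount
      _ ≤ #Y * w := by rw [← nsmul_eq_mul]; exact sum_le_card_nsmul _ _ _ fun y _ => hw y
  have hYb : (#Y : ℝ) ≤ #{v | f v = b} :=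
    Nat.cast_le.2 (card_le_card (biUnion_subset.2 fun _ _ => inter_subset_right))
  have hXu : #X * u ≤ (#Y + d) * u := by
    rcases le_total u w with huw | hwu
    · nlinarith
    · nlinarith [mul_nonneg d.cast_nonneg hpos.le, (#Y).cast_nonneg (α := ℝ)]
  exact_mod_cast le_of_mul_le_mul_right hXu hpos

end Linking

section Grouping

variable {A B T : Type*}

lemma sum_comp_le_sum [Fintype A] [Fintype B] {M : Type*} [AddCommMonoid M] [PartialOrder M]
    [CanonicallyOrderedAdd M] {φ : A → B} (hφ : Function.Injective φ)
    (F : B → M) : ∑ a, F (φ a) ≤ ∑ b, F b := by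
  rw [← sum_image (f := F) hφ.injOn]
  exact sum_le_sum_of_subset (subset_univ _)

lemma exists_injective_comp_eq [Fintype A] [Fintype B] {β : A → T} {γ : B → T}
    (h : ∀ t, Fintype.card {a // β a = t} ≤ Fintype.card {b // γ b = t}) :
    ∃ φ : A → B, Function.Injective φ ∧ γ ∘ φ = β := by
  have e (t : T) := (Function.Embedding.nonempty_of_card_le (h t)).some
  refine ⟨fun a => e (β a) ⟨a, rfl⟩, fun a a' haa' => ?_, funext fun a => (e (β a) ⟨a, rfl⟩).2⟩
  have hfibre {t : T} (ha : β a = t) (ha' : t = β a')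
      (heq : (e t ⟨a, ha⟩ : B) = e (β a') ⟨a', rfl⟩) : a = a' := by
    subst ha'
    exact congrArg Subtype.val ((e _).injective (Subtype.ext heq))
  have hβ : β a = β a' := by
    rw [← (e (β a) ⟨a, rfl⟩).2, ← (e (β a') ⟨a', rfl⟩).2]
    exact congrArg γ haa'
  exact hfibre rfl hβ haa'

lemma exists_card_fibre_ge [Fintype A] [Fintype T] [Nonempty T] {n : T → ℕ}
    (h : ∑ t, n t ≤ Fintype.card A) :
    ∃ ω : A → T, ∀ t, n t ≤ Fintype.card {a // ω a = t} := by
  have hcard : Fintype.card (Σ t, Fin (n t)) ≤ Fintype.card A := by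
    simpa only [Fintype.card_sigma, Fintype.card_fin] using h
  obtain ⟨e⟩ := Function.Embedding.nonempty_of_card_le hcard
  refine ⟨Function.extend e Sigma.fst fun _ => Classical.arbitrary T, fun t => ?_⟩
  rw [← Fintype.card_fin (n t)]
  refine Fintype.card_le_of_injective
    (fun i => ⟨e ⟨t, i⟩, e.injective.extend_apply _ _ _⟩) fun i j hij => ?_
  simpa using congrArg Subtype.val hij

-- Every type gets enough groups of size `g` to hold all its items; only one group per type may
-- stay incomplete.
lemma exists_grouping [Fintype A] [Fintype T] [Nonempty T] {g k : ℕ} (hg : 0 < g)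
    (h : Fintype.card A + g * Fintype.card T ≤ g * k) (β : A → T) :
    ∃ (ω : Fin k → T) (φ : A → Fin k × Fin g), Function.Injective φ ∧
      ∀ a, ω (φ a).1 = β a := by
  have hsum : ∑ t, (Fintype.card {a // β a = t} / g + 1) ≤ Fintype.card (Fin k) := by
    rw [Fintype.card_fin]
    refine Nat.le_of_mul_le_mul_left (le_trans ?_ h) hg
    rw [← Fintype.card_congr (Equiv.sigmaFiberEquiv β), Fintype.card_sigma, mul_sum,
      Fintype.card_eq_sum_ones, mul_sum, ← sum_add_distrib]
    refine sum_le_sum fun t _ => ?_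
    rw [mul_add]
    exact Nat.add_le_add_right (Nat.mul_div_le _ _) _
  obtain ⟨ω, hω⟩ := exists_card_fibre_ge hsum
  obtain ⟨φ, hφ, hφβ⟩ := exists_injective_comp_eq (β := β)
    (γ := fun b : Fin k × Fin g => ω b.1) fun t => by
      rw [Fintype.card_congr (Equiv.prodSubtypeFstEquivSubtypeProd (p := fun i => ω i = t)),
        Fintype.card_prod, Fintype.card_fin]
      refine le_trans ?_ (Nat.mul_le_mul_right g (hω t))
      exact (Nat.lt_div_mul_add hg).le.trans (by rw [add_mul, one_mul])
  exact ⟨ω, φ, hφ, fun a => congrFun hφβ a⟩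

end Grouping

section NearCover

variable {V : Type*} [Fintype V] {G : V → V → Prop} {ν : ℝ}

lemma sum_val_fibre {Λ : Type*} [Fintype Λ] [DecidableEq Λ] (f : V → Λ) :
    ∑ l, ({v | f v = l} : Finset V).val = (univ : Finset V).val := by
  simpa only [sum_multiset_singleton] using
    sum_fiberwise (univ : Finset V) f fun v => ({v} : Multiset V)

lemma exists_group_walks [Nonempty V] {d B g : ℕ} {P : Fin (B + 1) → Finset V}
    (h : ∀ s a b, HallLink G d s (P a) (P b)) (hg : g + B * d ≤ #(P 0)) (ω : Fin B → Bool) :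
    ∃ (x q : Fin g → V) (M : Fin g → Multiset V),
      (∀ t, PatternWalk G (List.ofFn ω) (x t) (q t) (M t)) ∧
      ∑ t, (x t ::ₘ M t) ≤ ∑ i, (P i).val := by
  obtain ⟨X, hX, hXcard, q, M, hwalk, hM⟩ := exists_walks_of_hallLink P h
    (List.ofFn fun i => (ω i, i.succ)) 0 subset_rfl
  rw [List.length_ofFn] at hXcard
  obtain ⟨x⟩ := Function.Embedding.nonempty_of_card_le (α := Fin g) (β := X)
    (by rw [Fintype.card_fin, Fintype.card_coe]; omega)
  refine ⟨fun t => x t, fun t => q (x t), fun t => M (x t), fun t => ?_, ?_⟩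
  · exact (hwalk _ (x t).2).congr (by rw [List.map_ofFn]; rfl) rfl
  · calc ∑ t, ((x t : V) ::ₘ M (x t))
        ≤ ∑ v : X, ((v : V) ::ₘ M v) :=
          sum_comp_le_sum x.injective fun v : X => (v : V) ::ₘ M v
      _ = X.val + ∑ v ∈ X, M v := by
          rw [sum_coe_sort X fun v => v ::ₘ M v]
          simp only [← Multiset.singleton_add, sum_add_distrib, sum_multiset_singleton]
      _ ≤ ∑ i, (P i).val := by
          rw [Fin.sum_univ_succ]
          refine add_le_add (val_le_iff.2 hX) (hM.trans (le_of_eq ?_))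
          rw [List.map_ofFn, List.sum_ofFn]
          rfl

lemma exists_disjoint_walks [Nonempty V] {d B k g m : ℕ} (f : V → Fin k × Fin (B + 1))
    (h : ∀ s a b, HallLink G d s {v | f v = a} {v | f v = b}) (hg : 0 < g)
    (hf : ∀ i, g + B * d ≤ #{v | f v = (i, 0)}) (hm : m + g * 2 ^ B ≤ g * k)
    {β : Fin m → List Bool} (hβ : ∀ j, (β j).length = B) :
    ∃ (p q : Fin m → V) (M : Fin m → Multiset V),
      (∀ j, PatternWalk G (β j) (p j) (q j) (M j)) ∧
      ∑ j, (p j ::ₘ M j) ≤ (univ : Finset V).val := by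
  choose b hb using fun j => (⟨fun i => (β j).get (i.cast (hβ j).symm),
    List.ext_get (by simp [hβ]) (by simp)⟩ : ∃ b : Fin B → Bool, List.ofFn b = β j)
  obtain ⟨ω, φ, hφ, hω⟩ := exists_grouping (T := Fin B → Bool) (k := k) hg
    (by simpa using hm) b
  choose x q M hwalk hM using fun i => exists_group_walks
    (P := fun t => {v | f v = (i, t)}) (fun s a b => h s (i, a) (i, b)) (hf i) (ω i)
  refine ⟨fun j => x (φ j).1 (φ j).2, fun j => q (φ j).1 (φ j).2,
    fun j => M (φ j).1 (φ j).2, fun j => ?_, ?_⟩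
  · have hj := hwalk (φ j).1 (φ j).2
    rwa [hω, hb] at hj
  · calc ∑ j, (x (φ j).1 (φ j).2 ::ₘ M (φ j).1 (φ j).2)
        ≤ ∑ a : Fin k × Fin g, (x a.1 a.2 ::ₘ M a.1 a.2) :=
          sum_comp_le_sum hφ fun a => x a.1 a.2 ::ₘ M a.1 a.2
      _ = ∑ i, ∑ t, (x i t ::ₘ M i t) := Fintype.sum_prod_type _
      _ ≤ ∑ i, ∑ t, ({v | f v = (i, t)} : Finset V).val := sum_le_sum fun i _ => hM i
      _ = ∑ a, ({v | f v = a} : Finset V).val :=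
          (Fintype.sum_prod_type fun a => ({v | f v = a} : Finset V).val).symm
      _ = (univ : Finset V).val := sum_val_fibre f

lemma IsExpander.exists_dirAdj_perms (hG : IsExpander G ν) (r : ℕ)
    (hr : r ≤ ν * Fintype.card V) :
    ∃ ρ : Bool → Fin r → Equiv.Perm V, (∀ s j v, DirAdj G s v (ρ s j v)) ∧
      (∀ s v, Function.Injective fun j => ρ s j v) ∧ ∀ s j, (ρ s j).symm = ρ (!s) j := by
  obtain ⟨π, hπ, hinj⟩ := hG.exists_perms r hr
  refine ⟨fun s j => cond s (π j) (π j).symm, fun s j v => ?_, fun s v => ?_, fun s j => ?_⟩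
  · cases s
    · exact ((π j).apply_symm_apply v).subst (motive := fun w => G ((π j).symm v) w) (hπ j _)
    · exact hπ j v
  · cases s
    · intro i j hij
      have hij : (π i).symm v = (π j).symm v := hij
      apply hinj ((π i).symm v)
      change π i ((π i).symm v) = π j ((π i).symm v)
      rw [Equiv.apply_symm_apply, hij, Equiv.apply_symm_apply]
    · exact hinj v
  · cases s <;> rfl

lemma IsExpander.exists_balanced_labelling (hG : IsExpander G ν) {ε : ℝ} (hε : 0 < ε)
    (hε' : ε ≤ 1) {Λ : Type*} [Fintype Λ] [DecidableEq Λ] [Nonempty Λ] (hn : 2 ≤ ν * Fintype.card V)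
    (hexp : 6 * Fintype.card Λ * Fintype.card V <
      Real.exp (ε ^ 2 / (8 * (Fintype.card Λ : ℝ) ^ 2) * ν / 2 * Fintype.card V)) :
    ∃ (f : V → Λ) (r : ℕ) (ρ : Bool → Fin r → Equiv.Perm V), 0 < r ∧
      (∀ s j v, DirAdj G s v (ρ s j v)) ∧ (∀ s j, (ρ s j).symm = ρ (!s) j) ∧
      (∀ a, (1 - ε) * (Fintype.card V / Fintype.card Λ) ≤ #{v | f v = a} ∧
        #{v | f v = a} ≤ (1 + ε) * (Fintype.card V / Fintype.card Λ)) ∧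
      ∀ s v a, (1 - ε) * (r / Fintype.card Λ) ≤ #{j | f (ρ s j v) = a} ∧
        #{j | f (ρ s j v) = a} ≤ (1 + ε) * (r / Fintype.card Λ) := by
  have hcard : (1 : ℝ) ≤ Fintype.card V := Nat.one_le_cast.2 hG.card_pos
  obtain ⟨r, hr, hr'⟩ : ∃ r : ℕ, (r : ℝ) ≤ ν * Fintype.card V ∧ ν * Fintype.card V < r + 1 :=
    ⟨_, Nat.floor_le (by linarith), Nat.lt_floor_add_one _⟩
  obtain ⟨ρ, hρ, hinj, hsymm⟩ := hG.exists_dirAdj_perms r hr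
  let D : Option (Bool × V) → Finset V := fun i =>
    i.elim univ fun q => univ.image fun j => ρ q.1 j q.2
  have hD (s v) : #(D (some (s, v))) = r :=
    (card_image_of_injective _ (hinj s v)).trans (card_fin r)
  obtain ⟨f, hf⟩ := exists_labelling (Λ := Λ) (μ := r) D hε hε' (by
    rintro (_ | ⟨s, v⟩)
    · change (r : ℝ) ≤ #(univ : Finset V)
      rw [card_univ]
      nlinarith [hG.small]
    · rw [hD]) (by
    refine lt_of_le_of_lt ?_ (hexp.trans_le (Real.exp_le_exp.2 ?_))
    · simp only [Fintype.card_option, Fintype.card_prod, Fintype.card_bool, Nat.cast_add,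
        Nat.cast_mul, Nat.cast_ofNat, Nat.cast_one]
      nlinarith [(Fintype.card Λ).cast_nonneg (α := ℝ)]
    · rw [mul_div_assoc, mul_assoc, mul_comm]
      exact mul_le_mul_of_nonneg_right (by linarith) (by positivity))
  refine ⟨f, r, ρ, Nat.cast_pos.1 (by linarith : (0 : ℝ) < r), hρ, hsymm, fun a => hf none a,
    fun s v a => ?_⟩
  have hsv := hf (some (s, v)) a
  have hfilter : #{w ∈ D (some (s, v)) | f w = a} = #{j | f (ρ s j v) = a} := by
    change #{w ∈ univ.image fun j => ρ s j v | f w = a} = _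
    rw [filter_image, card_image_of_injective _ (hinj s v)]
  rwa [hD, hfilter] at hsv

lemma deficiency_bound {ε x p d y : ℝ} (hε : 0 < ε) (hε' : ε ≤ 1 / 2) (hx : 0 ≤ x) (hy : 0 ≤ y)
    (hp : p ≤ (1 + ε) * x) (hd : 6 * ε * x ≤ d) :
    p * ((1 + ε) * y - (1 - ε) * y) ≤ d * ((1 - ε) * y) := by
  have hp' : p * (2 * ε) ≤ (1 + ε) * x * (2 * ε) := mul_le_mul_of_nonneg_right hp (by linarith)
  have hd' : 6 * ε * x * (1 - ε) ≤ d * (1 - ε) := mul_le_mul_of_nonneg_right hd (by linarith)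
  have hpd : p * (2 * ε) ≤ d * (1 - ε) := by nlinarith [mul_nonneg hε.le hx]
  nlinarith [mul_le_mul_of_nonneg_right hpd hy]

lemma IsExpander.exists_hallLink_labelling (hG : IsExpander G ν) {ε : ℝ} (hε : 0 < ε)
    (hε' : ε ≤ 1 / 2) {Λ : Type*} [Fintype Λ] [DecidableEq Λ] [Nonempty Λ]
    (hn : 2 ≤ ν * Fintype.card V)
    (hexp : 6 * Fintype.card Λ * Fintype.card V <
      Real.exp (ε ^ 2 / (8 * (Fintype.card Λ : ℝ) ^ 2) * ν / 2 * Fintype.card V)) {d : ℕ}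
    (hd : 6 * ε * (Fintype.card V / Fintype.card Λ) ≤ d) :
    ∃ f : V → Λ, (∀ a, (1 - ε) * (Fintype.card V / Fintype.card Λ) ≤ #{v | f v = a}) ∧
      ∀ s a b, HallLink G d s {v | f v = a} {v | f v = b} := by
  obtain ⟨f, r, ρ, hr, hρ, hsymm, hV, hρf⟩ :=
    hG.exists_balanced_labelling hε (by linarith) (Λ := Λ) hn hexp
  have hrΛ : (0 : ℝ) < r / Fintype.card Λ := by positivity
  refine ⟨f, fun a => (hV a).1, fun s a b => ?_⟩
  refine hallLink_of_counts (hρ s) (fun v => (hρf s v b).1) (fun y => ?_)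
    (mul_pos (by linarith) hrΛ) (deficiency_bound hε hε' (by positivity) hrΛ.le (hV b).2 hd)
  simpa only [hsymm] using (hρf (!s) y a).2

-- `d` is the deficiency of the matchings and `g` the number of walks that each group supplies.
lemma exists_deficiency_group_size {B k m : ℕ} {η ε x : ℝ} (hη : 0 < η) (hη' : η ≤ 1)
    (hε : 4 * (6 * B + 1) * ε = η) (hk : 2 ^ (B + 1) ≤ η * k) (hx : 4 * (B + 1) ≤ x * η ^ 2)
    (hm : m ≤ (1 - η) * (x * k)) :
    ∃ d g : ℕ, 0 < g ∧ 6 * ε * x ≤ d ∧ g + B * d ≤ (1 - ε) * x ∧ m + g * 2 ^ B ≤ g * k := by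
  have hB : (0 : ℝ) ≤ B := B.cast_nonneg
  have hxpos : 0 < x := pos_of_mul_pos_left (by linarith : 0 < x * η ^ 2) (by positivity)
  have hxη : 4 * (B + 1) ≤ x * η := hx.trans (by nlinarith [mul_pos hxpos hη])
  have hx4 : 4 ≤ x := by nlinarith
  have hεpos : 0 < ε := by
    refine pos_of_mul_pos_right (hε.symm ▸ hη : 0 < 4 * (6 * (B : ℝ) + 1) * ε) (by positivity)
  have hg : ⌊(1 - η / 2) * x⌋₊ ≤ (1 - η / 2) * x := Nat.floor_le (by nlinarith)
  have hg' : (1 - η / 2) * x < ⌊(1 - η / 2) * x⌋₊ + 1 := Nat.lt_floor_add_one _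
  have hd : ⌈6 * ε * x⌉₊ < 6 * ε * x + 1 := Nat.ceil_lt_add_one (by positivity)
  refine ⟨⌈6 * ε * x⌉₊, ⌊(1 - η / 2) * x⌋₊, Nat.floor_pos.2 (by nlinarith), Nat.le_ceil _, ?_, ?_⟩
  · have hBd : (B : ℝ) * ⌈6 * ε * x⌉₊ ≤ B * (6 * ε * x + 1) :=
      mul_le_mul_of_nonneg_left hd.le hB
    have hεx : 4 * (6 * B + 1) * ε * x = η * x := by rw [hε]
    nlinarith
  · have hηg : (1 - η) * x ≤ (1 - η / 2) * ⌊(1 - η / 2) * x⌋₊ := by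
      have h := mul_le_mul_of_nonneg_left hg'.le (by linarith : 0 ≤ 1 - η / 2)
      nlinarith
    have hgk : (⌊(1 - η / 2) * x⌋₊ : ℝ) * 2 ^ (B + 1) ≤ ⌊(1 - η / 2) * x⌋₊ * (η * k) :=
      mul_le_mul_of_nonneg_left hk (Nat.cast_nonneg _)
    have hmk := mul_le_mul_of_nonneg_right hηg k.cast_nonneg
    rw [pow_succ] at hgk
    have hreal : (m : ℝ) + ⌊(1 - η / 2) * x⌋₊ * 2 ^ B ≤ ⌊(1 - η / 2) * x⌋₊ * k := by linarith
    exact_mod_cast hreal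

lemma eventually_mul_pow_lt_exp (A : ℝ) {c : ℝ} (hc : 0 < c) (k : ℕ) :
    ∀ᶠ n : ℕ in Filter.atTop, A * (n : ℝ) ^ k < Real.exp (c * n) := by
  have h := ((isLittleO_pow_exp_pos_mul_atTop k hc).const_mul_left A).comp_tendsto
    tendsto_natCast_atTop_atTop
  filter_upwards [h.def one_half_pos] with n hn
  calc A * (n : ℝ) ^ k ≤ ‖A * (n : ℝ) ^ k‖ := Real.le_norm_self _
    _ ≤ 1 / 2 * ‖Real.exp (c * n)‖ := hn
    _ = 1 / 2 * Real.exp (c * n) := by rw [Real.norm_eq_abs, Real.abs_exp]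
    _ < Real.exp (c * n) := by linarith [Real.exp_pos (c * n)]

lemma eventually_le_mul_natCast (A : ℝ) {c : ℝ} (hc : 0 < c) :
    ∀ᶠ n : ℕ in Filter.atTop, A ≤ c * n :=
  (tendsto_natCast_atTop_atTop.const_mul_atTop hc).eventually_ge_atTop A

lemma exists_near_cover (B : ℕ) {η : ℝ} (hη : 0 < η) (hη' : η ≤ 1) (hν : 0 < ν) :
    ∃ n₀ : ℕ, ∀ (V : Type u) [Fintype V] (G : V → V → Prop), IsExpander G ν →
      n₀ ≤ Fintype.card V → ∀ (m : ℕ) (β : Fin m → List Bool), (∀ j, (β j).length = B) →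
      m * (B + 1) ≤ (1 - η) * Fintype.card V →
      ∃ (p q : Fin m → V) (M : Fin m → Multiset V),
        (∀ j, PatternWalk G (β j) (p j) (q j) (M j)) ∧
        ∑ j, (p j ::ₘ M j) ≤ (univ : Finset V).val := by
  obtain ⟨ε, hε, hεη⟩ : ∃ ε > 0, 4 * (6 * B + 1) * ε = η :=
    ⟨η / (4 * (6 * B + 1)), by positivity, by field_simp⟩
  obtain ⟨k, hk⟩ := exists_nat_ge ((2 : ℝ) ^ (B + 1) / η)
  rw [div_le_iff₀' hη] at hk
  have hkpos : 0 < k := Nat.pos_of_ne_zero fun h => by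
    rw [h, Nat.cast_zero, mul_zero] at hk
    linarith [pow_pos (two_pos (α := ℝ)) (B + 1)]
  have : Nonempty (Fin k × Fin (B + 1)) := ⟨(⟨0, hkpos⟩, 0)⟩
  have hN : (Fintype.card (Fin k × Fin (B + 1)) : ℝ) = k * (B + 1) := by simp
  set N := Fintype.card (Fin k × Fin (B + 1))
  have hNpos : (0 : ℝ) < N := by rw [hN]; positivity
  obtain ⟨n₀, hn₀⟩ := Filter.eventually_atTop.1 ((eventually_le_mul_natCast 2 hν).and
    ((eventually_mul_pow_lt_exp (6 * N)
      (by positivity : 0 < ε ^ 2 / (8 * (N : ℝ) ^ 2) * ν / 2) 1).and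
    (eventually_le_mul_natCast (4 * (B + 1)) (by positivity : 0 < η ^ 2 / N))))
  refine ⟨n₀, fun V _ G hG hn m β hβ hm => ?_⟩
  obtain ⟨hνn, hexp, hx⟩ := hn₀ _ hn
  have : Nonempty V := Fintype.card_pos_iff.1 hG.card_pos
  have hxk : (Fintype.card V : ℝ) = Fintype.card V / N * k * (B + 1) := by
    rw [mul_assoc, ← hN]; field_simp
  obtain ⟨d, g, hg, hd, hgd, hmg⟩ := exists_deficiency_group_size (m := m)
    (x := Fintype.card V / N) hη hη' hεη hk (hx.trans_eq (by ring))
    (le_of_mul_le_mul_right (hm.trans_eq (by linear_combination (1 - η) * hxk))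
      (by positivity : (0 : ℝ) < B + 1))
  obtain ⟨f, hf, hlink⟩ := hG.exists_hallLink_labelling hε (by nlinarith [B.cast_nonneg (α := ℝ)])
    hνn (by simpa only [pow_one] using hexp) hd
  have hf' (i : Fin k) : g + B * d ≤ #{v | f v = (i, 0)} := by
    exact_mod_cast hgd.trans (hf (i, 0))
  exact exists_disjoint_walks f hlink hg hf' hmg hβ

end NearCover

section Assembly

/-! ### Assembling the Hamilton cycle -/

variable {V : Type u} [Fintype V] {G : V → V → Prop} {ν : ℝ} {l N h : ℕ}

/-- The sets of at least `ν n` vertices from which the next vertex of a walk may be chosen. -/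
noncomputable def candidates (G : V → V → Prop) (ν : ℝ) : Finset (Finset V) :=
  {U | ν * Fintype.card V ≤ #U ∧ ∃ z p s τ, U = nbhd G s z ∩ robustReach G ν p τ}

-- A pattern longer than `l` reaches every vertex, so that patterns of length at most `l` suffice.
lemma IsExpander.exists_robustReach_eq (hG : IsExpander G ν) (hl : 1 ≤ l * ν) (p : V)
    (τ : List Bool) : ∃ w : Σ k : Fin (l + 1), Fin k → Bool,
      robustReach G ν p τ = robustReach G ν p (List.ofFn w.2) := by
  rcases le_or_gt τ.length l with hτ | hτ
  · exact ⟨⟨⟨τ.length, Nat.lt_succ_of_le hτ⟩, τ.get⟩, by rw [List.ofFn_get]⟩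
  · refine ⟨⟨Fin.last l, fun _ => true⟩, ?_⟩
    rw [hG.robustReach_eq_univ, hG.robustReach_eq_univ]
    · simpa using hl
    · exact hl.trans (mul_le_mul_of_nonneg_right (Nat.cast_le.2 hτ.le) hG.pos.le)

lemma IsExpander.card_candidates_le (hG : IsExpander G ν) (hl : 1 ≤ l * ν) :
    #(candidates G ν) ≤
      Fintype.card V ^ 2 * Fintype.card (Bool × Σ k : Fin (l + 1), Fin k → Bool) := by
  rw [sq, ← Fintype.card_prod, ← Fintype.card_prod, ← card_univ]
  refine le_trans (card_le_card ?_) (card_image_le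
    (f := fun q : (V × V) × Bool × Σ k : Fin (l + 1), Fin k → Bool =>
      nbhd G q.2.1 q.1.1 ∩ robustReach G ν q.1.2 (List.ofFn q.2.2.2)))
  intro U hU
  obtain ⟨-, -, z, p, s, τ, rfl⟩ := mem_filter.1 hU
  obtain ⟨w, hw⟩ := hG.exists_robustReach_eq hl p τ
  exact mem_image.2 ⟨((z, p), s, w), mem_univ _, by rw [hw]⟩

lemma IsExpander.exists_absorbers (hG : IsExpander G ν) (hl : 1 ≤ l * ν) {Q : ℕ → List Bool}
    (hQ : ∀ i < N, (Q i).length = absorberLength l)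
    (hN : 1 + N * absorberLength l ≤ ν ^ 3 / 6 * Fintype.card V)
    (hh : Fintype.card V * #(candidates G ν) * (1 - (ν ^ 3 / 6) ^ absorberLength l / 2) ^ N ≤
      (1 / 2) ^ h) :
    ∃ A : Absorbers G ν N h, A.Q = Q ∧ A.vertices.Nodup := by
  obtain ⟨k, hk⟩ : ∃ k, absorberLength l = k + 2 :=
    Nat.exists_eq_add_of_le' (by rw [absorberLength]; omega)
  have hν := hG.pos
  have hcube := hG.cube_div_three_le
  have hc : ν ^ 3 / 3 / 2 = ν ^ 3 / 6 := by ring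
  have : Nonempty V := Fintype.card_pos_iff.1 hG.card_pos
  obtain ⟨e, y, M, he, hwalk, hfresh, hhits⟩ := OrientedHamilton.exists_absorbers (k := k) (Q := Q)
    (x := fun q : V × candidates G ν => q.1) (U := fun q => q.2) (c := ν ^ 3 / 3) (h := h)
    (by positivity) (by linarith [hG.small]) hG.card_pos
    (fun q => (mul_le_mul_of_nonneg_right hcube (Nat.cast_nonneg _)).trans
      (mem_filter.1 q.2.2).2.1)
    (fun i hi => (hQ i hi).trans hk) (fun i hi => hG.absorbs hl (hQ i hi))
    (Classical.arbitrary V) (by rw [hk] at hN; rw [hc]; exact_mod_cast hN)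
    (by rw [hk] at hh; rw [hc, Fintype.card_prod, Fintype.card_coe]; exact_mod_cast hh)
  refine ⟨⟨Q, e, y, M, hwalk, fun x z p s τ hz => ?_⟩, rfl, ?_⟩
  · exact hhits (x, ⟨_, mem_filter.2 ⟨mem_univ _, mem_robustNbhd.1 hz, z, p, s, τ, rfl⟩⟩)
  · rw [Absorbers.vertices, Multiset.singleton_add, Multiset.nodup_cons]
    exact ⟨fun h₀ => hfresh.2 _ h₀ (by simp [he]), hfresh.1⟩

lemma mul_pow_le_one_half_pow {A x δ : ℝ} (hδ : δ ≤ 1) (hA : A ≤ Real.exp x)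
    (hx : x + h ≤ δ * N) : A * (1 - δ) ^ N ≤ (1 / 2) ^ h := by
  have hδ' : 0 ≤ 1 - δ := by linarith
  calc A * (1 - δ) ^ N ≤ Real.exp x * Real.exp (-δ) ^ N := by
        gcongr
        exact Real.one_sub_le_exp_neg δ
    _ = Real.exp (x + N * -δ) := by rw [Real.exp_add, Real.exp_nat_mul]
    _ ≤ Real.exp (h * -1) := Real.exp_le_exp.2 (by linarith)
    _ = Real.exp (-1) ^ h := Real.exp_nat_mul _ _
    _ ≤ (1 / 2) ^ h := pow_le_pow_left₀ (Real.exp_pos _).le Real.exp_neg_one_lt_half.le _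

lemma exists_linear_absorbers {γ : ℝ} (hν : 0 < ν) (hl : 1 ≤ l * ν) (hγ : 0 < γ)
    (hγl : γ * absorberLength l ≤ ν ^ 3 / 12) :
    ∃ c : ℝ, 0 < c ∧ ∃ n₀ : ℕ, ∀ (V : Type u) [Fintype V] (G : V → V → Prop), IsExpander G ν →
      n₀ ≤ Fintype.card V → ∀ Q : ℕ → List Bool,
      (∀ i < ⌊γ * Fintype.card V⌋₊, (Q i).length = absorberLength l) →
      ∃ A : Absorbers G ν ⌊γ * Fintype.card V⌋₊ ⌊c * Fintype.card V⌋₊,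
        A.Q = Q ∧ A.vertices.Nodup := by
  obtain ⟨δ, hδ⟩ : ∃ δ, δ = (ν ^ 3 / 6) ^ absorberLength l / 2 := ⟨_, rfl⟩
  have hδpos : 0 < δ := by rw [hδ]; positivity
  obtain ⟨R, hR⟩ : ∃ R, R = Fintype.card (Bool × Σ k : Fin (l + 1), Fin k → Bool) := ⟨_, rfl⟩
  have hc : 0 < δ * γ / 4 := by positivity
  obtain ⟨n₀, hn₀⟩ := Filter.eventually_atTop.1
    ((eventually_le_mul_natCast 1 (by positivity : 0 < ν ^ 3 / 12)).and
    ((eventually_le_mul_natCast 2 hγ).and (eventually_mul_pow_lt_exp R hc 3)))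
  refine ⟨δ * γ / 4, hc, n₀, fun V _ G hG hn Q hQ => hG.exists_absorbers hl hQ ?_ ?_⟩
  all_goals
    obtain ⟨hone, htwo, hexp⟩ := hn₀ _ hn
    have hN := Nat.floor_le (by linarith : 0 ≤ γ * Fintype.card V)
    have hN' := Nat.lt_floor_add_one (γ * Fintype.card V)
  · have hNl := mul_le_mul_of_nonneg_right hN (absorberLength l).cast_nonneg
    have hγn := mul_le_mul_of_nonneg_right hγl (Fintype.card V).cast_nonneg
    linarith
  · rw [← hδ]
    refine mul_pow_le_one_half_pow (x := δ * γ / 4 * (Fintype.card V : ℝ)) ?_ ?_ ?_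
    · have hsmall : ν ^ 3 / 6 ≤ 1 := by linarith [hG.cube_div_three_le, hG.small]
      linarith [pow_le_one₀ (n := absorberLength l) (by positivity) hsmall]
    · refine le_trans ?_ hexp.le
      have hcard : (#(candidates G ν) : ℝ) ≤ Fintype.card V ^ 2 * R := by
        exact_mod_cast hR ▸ hG.card_candidates_le hl
      nlinarith [(Fintype.card V).cast_nonneg (α := ℝ)]
    · have hh := Nat.floor_le (by positivity : 0 ≤ δ * γ / 4 * Fintype.card V)
      nlinarith

lemma exists_eq_flatMap_append {α : Type*} {K r : ℕ} {D : List α} (hD : D.length = N * K + r) :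
    ∃ (Q : ℕ → List α) (F : List α), (∀ i < N, (Q i).length = K) ∧ F.length = r ∧
      D = (List.range N).flatMap Q ++ F := by
  induction N generalizing r with
  | zero => exact ⟨fun _ => [], D, by simp, by simpa using hD, by simp⟩
  | succ N ih =>
    obtain ⟨Q, F', hQ, hF', rfl⟩ := ih (r := K + r) (by rw [hD]; ring)
    obtain ⟨A, F, rfl, hA, hF⟩ := exists_append_of_length hF'
    refine ⟨Function.update Q N A, F, fun i hi => ?_, hF, ?_⟩
    · rcases (Nat.lt_succ_iff_lt_or_eq.1 hi) with hi | rfl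
      · rw [Function.update_of_ne hi.ne, hQ i hi]
      · rwa [Function.update_self]
    · rw [List.range_succ, List.flatMap_append, List.flatMap_singleton, Function.update_self,
        List.append_assoc]
      congr 1
      exact List.flatMap_congr fun i hi =>
        (Function.update_of_ne (List.mem_range.1 hi).ne _ _).symm

lemma exists_eq_flatten_append {α : Type*} {m l B r : ℕ} {D : List α}
    (hD : D.length = m * (l + B) + r) :
    ∃ (C β : Fin m → List α) (F : List α), (∀ j, (C j).length = l) ∧ (∀ j, (β j).length = B) ∧
      F.length = r ∧ D = (List.ofFn fun j => C j ++ β j).flatten ++ F := by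
  obtain ⟨Q, F, hQ, hF, rfl⟩ := exists_eq_flatMap_append hD
  choose C β hCβ hC hβ using fun j : Fin m => exists_append_of_length (hQ j j.2)
  refine ⟨C, β, F, hC, hβ, hF, ?_⟩
  simp only [← hCβ, List.flatMap_def, ← List.map_coe_finRange_eq_range, List.map_map,
    List.ofFn_eq_map]
  rfl

lemma Absorbers.card_vertices (A : Absorbers G ν N h) :
    A.vertices.card = 1 + ((List.range N).flatMap A.Q).length := by
  have hA : A.IsSwitching 0 A.y := ⟨A.walk, ∅, by simp, fun _ _ => rfl⟩
  rw [vertices, Multiset.card_add, (hA.walk_flatMap le_rfl).card_eq, Multiset.card_singleton]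

lemma Absorbers.exists_vertices_add_eq (A : Absorbers G ν N h) (hA : A.vertices.Nodup)
    {M : Multiset V} (hM : M ≤ ({v | v ∉ A.vertices} : Finset V).val) :
    ∃ X, A.vertices + X + M = (univ : Finset V).val := by
  have hle : A.vertices + M ≤ (univ : Finset V).val := by
    refine (Multiset.le_iff_subset (Multiset.nodup_add.2 ⟨hA, Multiset.nodup_of_le hM (nodup _),
      Multiset.disjoint_left.2 fun hv hv' => ?_⟩)).2 fun v _ => mem_univ_val v
    exact (mem_filter.1 (Multiset.mem_of_le hM hv')).2 hv
  obtain ⟨X, hX⟩ := Multiset.le_iff_exists_add.1 hle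
  exact ⟨X, by rw [hX, add_right_comm]⟩

theorem Absorbers.hamilton (A : Absorbers G ν N h) (hG : IsExpander G ν) (hA : A.vertices.Nodup)
    {m : ℕ} {C β : Fin m → List Bool} {F D : List Bool} (hl : 1 ≤ l * ν)
    (hC : ∀ j, (C j).length = l) (hF : l ≤ F.length)
    (hD : D = (List.range N).flatMap A.Q ++ ((List.ofFn fun j => C j ++ β j).flatten ++ F))
    (hcard : D.length = Fintype.card V) (hh : m * l + F.length ≤ h)
    {p q : Fin m → V} {M : Fin m → Multiset V}
    (hwalk : ∀ j, PatternWalk G (β j) (p j) (q j) (M j))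
    (hM : ∑ j, (p j ::ₘ M j) ≤ ({v | v ∉ A.vertices} : Finset V).val) :
    PatternWalk G D (A.e 0) (A.e 0) (univ : Finset V).val := by
  obtain ⟨X, hX⟩ := A.exists_vertices_add_eq hA hM
  let L : List (Block G) := List.ofFn fun j => ⟨C j, β j, p j, q j, M j, hwalk j⟩
  have hlen := length_pos_of_one_le_mul (σ := List.replicate l true) (by simpa using hl)
  rw [List.length_replicate] at hlen
  have hconn : (L.map fun B => B.C.length - 1).sum = m * (l - 1) := by
    simp [L, List.map_ofFn, List.sum_ofFn, hC]
  have hL : (L.map fun B => B.p ::ₘ B.M).sum = ∑ j, (p j ::ₘ M j) := by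
    simp [L, List.map_ofFn, List.sum_ofFn]
  have hLD : L.flatMap (fun B => B.C ++ B.β) = (List.ofFn fun j => C j ++ β j).flatten := by
    simp only [L, List.flatMap_def, List.map_ofFn]
    rfl
  have hXcard : X.card = m * (l - 1) + (F.length - 1) := by
    have h₁ := congrArg Multiset.card hX
    have h₂ : (∑ j, (p j ::ₘ M j)).card = ∑ j, (β j).length + m := by
      simp [Multiset.card_sum, fun j => (hwalk j).card_eq, sum_add_distrib]
    have h₃ : (List.ofFn fun j => C j ++ β j).flatten.length = m * l + ∑ j, (β j).length := by
      simp [List.length_flatten, List.map_ofFn, List.sum_ofFn, hC, sum_add_distrib]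
    rw [Multiset.card_add, Multiset.card_add, A.card_vertices, h₂, card_val, card_univ, ← hcard, hD,
      List.length_append, List.length_append, h₃] at h₁
    have h₄ : m * l = m * (l - 1) + m := by rw [← Nat.mul_succ, Nat.succ_eq_add_one]; congr; omega
    omega
  have hclosed := A.closedWalk hG (F := F) (L := L) (X := X)
    (hl.trans (mul_le_mul_of_nonneg_right (Nat.cast_le.2 hF) hG.pos.le))
    (fun B hB => by obtain ⟨j, rfl⟩ := (List.mem_ofFn' _ _).1 hB; rwa [hC])
    (by rw [hXcard, hconn])
    (by have := Nat.mul_le_mul_left m (Nat.sub_le l 1); omega)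
  exact hclosed.congr (by rw [hLD, hD]) (by rw [hL, hX])

lemma card_nbhd_le_card_nbhd_compl_add (W : Finset V) (s : Bool) (x : {v // v ∉ W}) :
    #(nbhd G s x) ≤ #(nbhd (fun y z : {v // v ∉ W} => G y z) s x) + #W := by
  rw [← card_map (Function.Embedding.subtype _)]
  refine (card_le_card fun y hy => ?_).trans (card_union_le _ _)
  by_cases hyW : y ∈ W
  · exact mem_union_right _ hyW
  · refine mem_union_left _ (mem_map.2 ⟨⟨y, hyW⟩, mem_nbhd.2 ?_, rfl⟩)
    rw [mem_nbhd] at hy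
    cases s <;> exact hy

lemma cast_card_compl (W : Finset V) :
    (Fintype.card {v // v ∉ W} : ℝ) = Fintype.card V - #W := by
  rw [Fintype.card_subtype_compl, Fintype.card_coe, Nat.cast_sub (card_le_univ W)]

lemma _root_.IsOriented.isExpander_compl {α : ℝ} (hG : IsOriented G) (hα : 0 < α)
    (hα' : α ≤ 1 / 8) (hdeg : ∀ s x, (3 / 8 + α) * (Fintype.card V : ℝ) ≤ #(nbhd G s x))
    {W : Finset V} (hW : #W ≤ α / 2 * (Fintype.card V : ℝ)) (hV : 0 < Fintype.card V) :
    IsExpander (fun x y : {v // v ∉ W} => G x y) (α / 200) := by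
  have hn : (0 : ℝ) < Fintype.card V := Nat.cast_pos.2 hV
  rw [show α / 200 = α / 2 / 100 by ring]
  refine IsOriented.isExpander (fun x y => hG x y) (by linarith) (by linarith) (fun s x => ?_) ?_
  · have hcard : (#(nbhd G s x) : ℝ) ≤ #(nbhd (fun y z : {v // v ∉ W} => G y z) s x) + #W := by
      exact_mod_cast card_nbhd_le_card_nbhd_compl_add W s x
    rw [cast_card_compl]
    nlinarith [hdeg s x, (#W).cast_nonneg (α := ℝ)]
  · rw [← Nat.cast_pos (α := ℝ), cast_card_compl]
    nlinarith

lemma sum_map_val_le {W : Finset V} {m : ℕ} {p : Fin m → {v // v ∉ W}}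
    {M : Fin m → Multiset {v // v ∉ W}} (hM : ∑ j, (p j ::ₘ M j) ≤ (univ : Finset _).val) :
    ∑ j, ((p j : V) ::ₘ (M j).map Subtype.val) ≤ ({v | v ∉ W} : Finset V).val := by
  have hsum : ∑ j, ((p j : V) ::ₘ (M j).map Subtype.val) =
      (∑ j, (p j ::ₘ M j)).map Subtype.val := by
    rw [← Multiset.coe_mapAddMonoidHom, map_sum]
    exact sum_congr rfl fun j _ => (Multiset.map_cons _ _ _).symm
  rw [hsum]
  refine (Multiset.map_le_map hM).trans ?_
  rw [Multiset.le_iff_subset (univ.nodup.map Subtype.val_injective)]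
  intro v hv
  obtain ⟨w, -, rfl⟩ := Multiset.mem_map.1 hv
  exact mem_filter.2 ⟨mem_univ _, w.2⟩

lemma exists_near_cover_compl (B : ℕ) {η α : ℝ} (hη : 0 < η) (hη' : η ≤ 1) (hα : 0 < α)
    (hα' : α ≤ 1 / 8) :
    ∃ n₀ : ℕ, ∀ (V : Type u) [Fintype V] (G : V → V → Prop), IsOriented G →
      n₀ ≤ Fintype.card V → (∀ s x, (3 / 8 + α) * (Fintype.card V : ℝ) ≤ #(nbhd G s x)) →
      ∀ W : Finset V, #W ≤ α / 2 * (Fintype.card V : ℝ) → ∀ (m : ℕ) (β : Fin m → List Bool),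
      (∀ j, (β j).length = B) → m * (B + 1) ≤ (1 - η) * (Fintype.card V - #W) →
      ∃ (p q : Fin m → V) (M : Fin m → Multiset V),
        (∀ j, PatternWalk G (β j) (p j) (q j) (M j)) ∧
        ∑ j, (p j ::ₘ M j) ≤ ({v | v ∉ W} : Finset V).val := by
  obtain ⟨n₀, hn₀⟩ := exists_near_cover.{u} B hη hη' (by positivity : 0 < α / 200)
  refine ⟨2 * n₀ + 1, fun V _ G hG hn hdeg W hW m β hβ hm => ?_⟩
  have hn₀W : n₀ ≤ Fintype.card {v // v ∉ W} := by
    have hn' : (2 * n₀ + 1 : ℝ) ≤ Fintype.card V := by exact_mod_cast hn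
    rw [← Nat.cast_le (α := ℝ), cast_card_compl]
    nlinarith
  obtain ⟨p, q, M, hwalk, hM⟩ := hn₀ _ _ (hG.isExpander_compl hα hα' hdeg hW (by omega)) hn₀W m β
    hβ (by rwa [cast_card_compl])
  exact ⟨fun j => p j, fun j => q j, fun j => (M j).map Subtype.val,
    fun j => (hwalk j).map fun _ _ hxy => hxy, sum_map_val_le hM⟩

end Assembly

section Conclusion

variable {V : Type u} {G : V → V → Prop}

lemma length_flatMap_range {α : Type*} {N K : ℕ} {Q : ℕ → List α}
    (hQ : ∀ i < N, (Q i).length = K) : ((List.range N).flatMap Q).length = N * K := by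
  rw [List.length_flatMap, List.map_congr_left fun i hi => hQ i (List.mem_range.1 hi)]
  simp

lemma exists_pattern_split {α : Type*} {N K l B : ℕ} {D : List α} (hl : 0 < l)
    (hD : N * K + l ≤ D.length) :
    ∃ (m : ℕ) (Q : ℕ → List α) (C β : Fin m → List α) (F : List α),
      (∀ i < N, (Q i).length = K) ∧ (∀ j, (C j).length = l) ∧ (∀ j, (β j).length = B) ∧
      l ≤ F.length ∧ F.length ≤ 2 * l + B ∧
      N * K + (m * (l + B) + F.length) = D.length ∧
      D = (List.range N).flatMap Q ++ ((List.ofFn fun j => C j ++ β j).flatten ++ F) := by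
  obtain ⟨t, ht⟩ := Nat.exists_eq_add_of_le hD
  have hmod := Nat.mod_lt t (by omega : 0 < l + B)
  have hdiv : t / (l + B) * (l + B) + t % (l + B) = t := Nat.div_add_mod' t (l + B)
  obtain ⟨Q, E, hQ, hE, hDE⟩ := exists_eq_flatMap_append (r := l + t) (ht.trans (add_assoc _ _ _))
  obtain ⟨C, β, F, hC, hβ, hF, hEF⟩ :=
    exists_eq_flatten_append (m := t / (l + B)) (l := l) (B := B) (r := l + t % (l + B)) (D := E)
      (by omega)
  exact ⟨_, Q, C, β, F, hQ, hC, hβ, by omega, by omega, by omega, by rw [hDE, hEF]⟩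

lemma mul_add_one_le_of_mul_add_le {m l B : ℕ} {x : ℝ} (hl : 2 ≤ l) (hx : m * (l + B) ≤ x) :
    m * (B + 1) ≤ (1 - 1 / (B + l)) * x := by
  have hl' : (2 : ℝ) ≤ l := by exact_mod_cast hl
  have hBl : (0 : ℝ) < B + l := by positivity
  rw [one_sub_div hBl.ne', div_mul_eq_mul_div, le_div_iff₀ hBl]
  calc (m : ℝ) * (B + 1) * (B + l) = (B + 1) * (m * (l + B)) := by ring
    _ ≤ (B + l - 1) * (m * (l + B)) := by gcongr; linarith
    _ ≤ (B + l - 1) * x := by gcongr; linarith [B.cast_nonneg (α := ℝ)]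

lemma mul_add_le_floor {m l B r : ℕ} {c x : ℝ} (hc : 0 < c) (hB : 2 * l ≤ B * c)
    (hm : m * (l + B) ≤ x) (hr : r ≤ 2 * l + B) (hx : 2 * l + B ≤ c / 2 * x) :
    m * l + r ≤ ⌊c * x⌋₊ := by
  have hr' : (r : ℝ) ≤ 2 * l + B := by exact_mod_cast hr
  have hml : (m : ℝ) * (2 * l) ≤ c * x := by
    calc (m : ℝ) * (2 * l) ≤ m * (B * c) := by gcongr
      _ ≤ c * (m * (l + B)) := by linarith [(by positivity : 0 ≤ c * (m : ℝ) * l)]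
      _ ≤ c * x := by gcongr
  apply Nat.le_floor
  push_cast
  linarith

lemma exists_segment_parameters {ν : ℝ} (hν : 0 < ν) (hν' : ν ≤ 1 / 2) :
    ∃ (l : ℕ) (γ : ℝ), 2 ≤ l ∧ 1 ≤ l * ν ∧ 0 < γ ∧ γ * absorberLength l = ν ^ 3 / 12 := by
  obtain ⟨l, hl⟩ := exists_nat_ge (1 / ν)
  rw [div_le_iff₀ hν] at hl
  have hK : (0 : ℝ) < absorberLength l := Nat.cast_pos.2 (by rw [absorberLength]; omega)
  exact ⟨l, ν ^ 3 / 12 / absorberLength l, by exact_mod_cast (by nlinarith : (2 : ℝ) ≤ l), hl,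
    by positivity, div_mul_cancel₀ _ hK.ne'⟩

lemma floor_mul_le_mul {γ ν x : ℝ} {K : ℕ} (hγ : 0 ≤ γ) (hν : 0 ≤ ν) (hν' : ν ≤ 1) (hx : 0 ≤ x)
    (hγK : γ * K = ν ^ 3 / 12) : ⌊γ * x⌋₊ * K ≤ ν * x := by
  calc (⌊γ * x⌋₊ * K : ℝ) ≤ γ * x * K := by gcongr; exact Nat.floor_le (by positivity)
    _ = ν ^ 3 / 12 * x := by rw [← hγK]; ring
    _ ≤ ν * x := by gcongr; nlinarith [pow_le_of_le_one hν hν' three_ne_zero]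

theorem exists_closedWalk {α : ℝ} (hα : 0 < α) (hα' : α ≤ 1 / 8) :
    ∃ n₀ : ℕ, ∀ (V : Type u) [Fintype V] (G : V → V → Prop), IsOriented G →
      n₀ ≤ Fintype.card V → (∀ s x, (3 / 8 + α) * (Fintype.card V : ℝ) ≤ #(nbhd G s x)) →
      ∀ D : List Bool, D.length = Fintype.card V →
      ∃ a, PatternWalk G D a a (univ : Finset V).val := by
  obtain ⟨ν, rfl⟩ : ∃ ν, α = 200 * ν := ⟨α / 200, by ring⟩
  have hν : 0 < ν := by linarith
  obtain ⟨l, γ, hl₂, hl, hγ, hγK⟩ := exists_segment_parameters hν (by linarith)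
  obtain ⟨c, hc, n₁, habsorb⟩ := exists_linear_absorbers.{u} hν hl hγ (by rw [hγK])
  obtain ⟨B, hB⟩ := exists_nat_ge (2 * l / c)
  rw [div_le_iff₀ hc] at hB
  obtain ⟨n₂, hcover⟩ := exists_near_cover_compl.{u} B (η := 1 / (B + l)) (by positivity)
    (div_le_one_of_le₀ (by exact_mod_cast (by omega : 1 ≤ B + l)) (by positivity)) hα hα'
  obtain ⟨n₀, hn₀⟩ := Filter.eventually_atTop.1 ((Filter.eventually_ge_atTop (n₁ + n₂ + 2 * l)).and
    ((eventually_le_mul_natCast 1 hν).and (eventually_le_mul_natCast (2 * l + B) (half_pos hc))))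
  refine ⟨n₀, fun V _ G hG hn hdeg D hD => ?_⟩
  obtain ⟨hsum, hone, hlarge⟩ := hn₀ _ hn
  have hexp : IsExpander G ν := by
    simpa using hG.isExpander (α := 100 * ν) (by linarith) (by linarith)
      (fun s x => le_trans (by gcongr; linarith) (hdeg s x)) (by omega)
  have hsum' : (2 * l : ℝ) ≤ Fintype.card V := by exact_mod_cast (by omega)
  have hNK := floor_mul_le_mul hγ.le hν.le (by linarith) (Fintype.card V).cast_nonneg hγK
  obtain ⟨m, Q, C, β, F, hQ, hC, hβ, hlF, hF, hlen, hDQ⟩ :=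
    exists_pattern_split (N := ⌊γ * Fintype.card V⌋₊) (K := absorberLength l) (l := l) (B := B)
      (D := D) (by omega) (by rw [hD]; exact_mod_cast (by push_cast; nlinarith :
        ((⌊γ * Fintype.card V⌋₊ * absorberLength l + l : ℕ) : ℝ) ≤ Fintype.card V))
  obtain ⟨A, rfl, hA⟩ := habsorb V G hexp (by omega) Q hQ
  have hW : A.vertices.card = 1 + ⌊γ * Fintype.card V⌋₊ * absorberLength l := by
    rw [A.card_vertices, length_flatMap_range hQ]
  have hm : (m * (l + B) : ℝ) ≤ Fintype.card V - A.vertices.card := by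
    rw [le_sub_iff_add_le]
    exact_mod_cast (by omega)
  obtain ⟨p, q, M, hwalk, hM⟩ := hcover V G hG (by omega) hdeg ⟨A.vertices, hA⟩
    (by rw [card_mk, hW]; push_cast; nlinarith) m β hβ (mul_add_one_le_of_mul_add_le hl₂ hm)
  exact ⟨A.e 0, A.hamilton hexp hA hl hC hlF hDQ hD
    (mul_add_le_floor hc hB (hm.trans (sub_le_self _ (Nat.cast_nonneg _))) hF hlarge) hwalk hM⟩

lemma card_nbhd_true [Fintype V] (x : V) : #(nbhd G true x) = outDeg G x := by
  rw [outDeg, Nat.card_eq_fintype_card, Fintype.card_subtype]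
  rfl

lemma card_nbhd_false [Fintype V] (x : V) : #(nbhd G false x) = inDeg G x := by
  rw [inDeg, Nat.card_eq_fintype_card, Fintype.card_subtype]
  rfl

lemma PatternWalk.exists_fun {Q : List Bool} {a b : V} {M : Multiset V}
    (h : PatternWalk G Q a b M) : ∃ f : ℕ → V, f 0 = a ∧ f Q.length = b ∧
      (∀ (i : ℕ) (hi : i < Q.length), DirAdj G Q[i] (f i) (f (i + 1))) ∧
      ∀ v ∈ M, ∃ i < Q.length, f (i + 1) = v := by
  induction h with
  | nil a => exact ⟨fun _ => a, rfl, rfl, by simp, by simp⟩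
  | @cons s Q a v b M hadj _ ih =>
    obtain ⟨f, hfa, hfb, hfadj, hfM⟩ := ih
    refine ⟨fun i => Nat.casesOn i a f, rfl, hfb, ?_, fun w hw => ?_⟩
    · rintro (_ | i) hi
      · simpa [hfa] using hadj
      · simpa using hfadj i (by simpa using hi)
    · rcases Multiset.mem_cons.1 hw with rfl | hw
      · exact ⟨0, by simp, hfa⟩
      · obtain ⟨i, hi, hiw⟩ := hfM w hw
        exact ⟨i + 1, by simpa using hi, hiw⟩

theorem PatternWalk.exists_cycle [Fintype V] {a : V} {ε : ZMod (Fintype.card V) → Bool}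
    (h : PatternWalk G
      (List.ofFn fun i : Fin (Fintype.card V) => ε ((i : ℕ) : ZMod (Fintype.card V)))
      a a (univ : Finset V).val) :
    ∃ f : ZMod (Fintype.card V) → V, Function.Bijective f ∧
      ∀ i, (ε i = true → G (f i) (f (i + 1))) ∧ (ε i = false → G (f (i + 1)) (f i)) := by
  have : NeZero (Fintype.card V) := ⟨(Fintype.card_pos_iff.2 ⟨a⟩).ne'⟩
  obtain ⟨f, hf₀, hfn, hfadj, hfsurj⟩ := h.exists_fun
  simp only [List.length_ofFn, List.getElem_ofFn] at hfn hfadj hfsurj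
  have hf : ∀ k ≤ Fintype.card V, f ((k : ZMod (Fintype.card V)).val) = f k := by
    intro k hk
    rcases hk.lt_or_eq with hk | rfl
    · rw [ZMod.val_natCast_of_lt hk]
    · rw [ZMod.natCast_self, ZMod.val_zero, hf₀, hfn]
  refine ⟨fun i => f i.val, ?_, fun i => ?_⟩
  · rw [Fintype.bijective_iff_surjective_and_card, ZMod.card]
    refine ⟨fun v => ?_, rfl⟩
    obtain ⟨i, hi, hiv⟩ := hfsurj v (mem_univ_val v)
    exact ⟨(i + 1 : ℕ), (hf _ hi).trans hiv⟩
  · have hadj := hfadj i.val (ZMod.val_lt i)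
    rw [← hf (i.val + 1) (ZMod.val_lt i), Nat.cast_succ, ZMod.natCast_zmod_val] at hadj
    constructor <;> intro hi <;> rwa [hi] at hadj

end Conclusion

end OrientedHamilton

/-- For every α > 0 there exists n₀ such that every oriented graph on n ≥ n₀ vertices with
minimum semidegree at least (3/8 + α)n contains every orientation of a Hamilton cycle:
for every direction pattern ε : ZMod n → Bool there is a cyclic ordering f of all vertices
such that for each i the edge f(i) → f(i+1) is present when ε i = true, and the edge
f(i+1) → f(i) is present when ε i = false. -/
theorem oriented_all_orientations_hamilton (α : ℝ) (hα : 0 < α) :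
    ∃ n₀ : ℕ, ∀ (V : Type) [Fintype V] (G : V → V → Prop),
      IsOriented G →
      n₀ ≤ Fintype.card V →
      (∀ x : V,
        (3 / 8 + α) * (Fintype.card V : ℝ) ≤ (outDeg G x : ℝ) ∧
        (3 / 8 + α) * (Fintype.card V : ℝ) ≤ (inDeg G x : ℝ)) →
      ∀ ε : ZMod (Fintype.card V) → Bool,
        ∃ f : ZMod (Fintype.card V) → V, Function.Bijective f ∧
          ∀ i, (ε i = true → G (f i) (f (i + 1))) ∧ (ε i = false → G (f (i + 1)) (f i)) := by
  obtain ⟨n₀, hn₀⟩ := OrientedHamilton.exists_closedWalk (α := min α (1 / 8))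
    (lt_min hα (by norm_num)) (min_le_right _ _)
  refine ⟨n₀, fun V _ G hG hn hdeg ε => ?_⟩
  have hmin : (3 / 8 + min α (1 / 8)) * (Fintype.card V : ℝ) ≤ (3 / 8 + α) * Fintype.card V := by
    gcongr
    exact min_le_left _ _
  obtain ⟨a, ha⟩ := hn₀ V G hG hn
    (fun s x => by
      cases s
      · exact OrientedHamilton.card_nbhd_false (G := G) x ▸ hmin.trans (hdeg x).2
      · exact OrientedHamilton.card_nbhd_true (G := G) x ▸ hmin.trans (hdeg x).1)
    (List.ofFn fun i : Fin (Fintype.card V) => ε ((i : ℕ) : ZMod (Fintype.card V)))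
    List.length_ofFn
  exact ha.exists_cycle
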